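/- arXiv:math-ph/0612083 — 10 statements merged into one kernel-verified Lean document; each statement's English description precedes it below -/
import Mathlib

section
/- For every natural number n, 7 · t(n+1) · g(n) < 6 · t(n) · g(n+1); in particular the ratio t(n)/g(n) is strictly decreasing, decreasing at least by a factor 6/7 at each step. -/
/-!
Writing `t₁`, `g₁` for the terms after `t`, `g`, the factor `6 / 7` is the one for which the terms
`t² g²` of `6 t g₁` and `7 t₁ g` cancel. The difference is then `3 t g³ + 6 t h (t + g)²`, which is
positive because the recursions keep `t` and `g` positive.
-/

section SierpinskiRecursion

variable {R : Type*} [CommSemiring R]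

/-- The recursion for the number `t` of spanning forests of the Sierpinski gasket `SG_2` in which
the three outmost vertices belong to one tree, as a polynomial in the preceding `t` and `g`. -/
def sg2TStep (t g : R) : R :=
  6 * t ^ 2 * g + 3 * t * g ^ 2

/-- The recursion for the number `g` of spanning forests of the Sierpinski gasket `SG_2` in which
one given outmost vertex belongs to one tree and the other two to another, as a polynomial in the
preceding `t`, `g` and `h`. -/
def sg2GStep (t g h : R) : R :=
  t ^ 2 * h + 2 * t * g * h + 7 * t * g ^ 2 + 4 * g ^ 3 + g ^ 2 * h

theorem six_mul_sg2GStep_eq (t g h : R) :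
    6 * t * sg2GStep t g h =
      7 * sg2TStep t g * g + (3 * t * g ^ 3 + 6 * t * h * (t + g) ^ 2) := by
  unfold sg2GStep sg2TStep
  ring

variable [PartialOrder R] [IsStrictOrderedRing R]

theorem sg2TStep_pos {t g : R} (ht : 0 < t) (hg : 0 < g) : 0 < sg2TStep t g := by
  unfold sg2TStep
  positivity

theorem sg2GStep_pos {t g h : R} (ht : 0 < t) (hg : 0 < g) (hh : 0 ≤ h) :
    0 < sg2GStep t g h := by
  unfold sg2GStep
  positivity

theorem seven_mul_sg2TStep_lt_six_mul_sg2GStep {t g h : R} (ht : 0 < t) (hg : 0 < g)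
    (hh : 0 ≤ h) : 7 * sg2TStep t g * g < 6 * t * sg2GStep t g h := by
  rw [six_mul_sg2GStep_eq]
  exact lt_add_of_pos_right _ (by positivity)

theorem sg2_t_pos_and_g_pos {t g h : ℕ → R} (ht0 : 0 < t 0) (hg0 : 0 < g 0)
    (hh : ∀ n, 0 ≤ h n) (ht : ∀ n, t (n + 1) = sg2TStep (t n) (g n))
    (hg : ∀ n, g (n + 1) = sg2GStep (t n) (g n) (h n)) (n : ℕ) : 0 < t n ∧ 0 < g n := by
  induction n with
  | zero => exact ⟨ht0, hg0⟩
  | succ n ih =>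
    obtain ⟨ht_pos, hg_pos⟩ := ih
    rw [ht, hg]
    exact ⟨sg2TStep_pos ht_pos hg_pos, sg2GStep_pos ht_pos hg_pos (hh n)⟩

theorem sg2_t_over_g_decreasing_general {t g h : ℕ → R} (ht0 : 0 < t 0) (hg0 : 0 < g 0)
    (hh : ∀ n, 0 ≤ h n) (ht : ∀ n, t (n + 1) = sg2TStep (t n) (g n))
    (hg : ∀ n, g (n + 1) = sg2GStep (t n) (g n) (h n)) (n : ℕ) :
    7 * t (n + 1) * g n < 6 * t n * g (n + 1) := by
  obtain ⟨ht_pos, hg_pos⟩ := sg2_t_pos_and_g_pos ht0 hg0 hh ht hg n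
  rw [ht, hg]
  exact seven_mul_sg2TStep_lt_six_mul_sg2GStep ht_pos hg_pos (hh n)

end SierpinskiRecursion

/-- The ratio `t(n)/g(n)` is strictly decreasing, at least by a factor 6/7 each step:
`7 * t(n+1) * g(n) < 6 * t(n) * g(n+1)`. -/
theorem sg2_t_over_g_decreasing
    (t g h f : ℕ → ℕ)
    (ht0 : t 0 = 3) (hg0 : g 0 = 1) (hh0 : h 0 = 1)
    (ht : ∀ n, t (n + 1) = 6 * t n ^ 2 * g n + 3 * t n * g n ^ 2)
    (hg : ∀ n, g (n + 1) = t n ^ 2 * h n + 2 * t n * g n * h n + 7 * t n * g n ^ 2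
        + 4 * g n ^ 3 + g n ^ 2 * h n)
    (hh : ∀ n, h (n + 1) = 12 * t n * g n * h n + 14 * g n ^ 3 + 24 * g n ^ 2 * h n
        + 9 * g n * h n ^ 2 + 3 * t n * h n ^ 2 + h n ^ 3)
    (hf : ∀ n, f n = t n + 3 * g n + h n) :
    ∀ n, 7 * t (n + 1) * g n < 6 * t n * g (n + 1) :=
  sg2_t_over_g_decreasing_general (by simp [ht0]) (by simp [hg0]) (fun n ↦ (h n).zero_le) ht hg
end

section
/- For every natural number n ≥ 2, t(n) < g(n) < h(n). -/
/-!
The initial ordering is the wrong one: `(t, g, h)` is `(3, 1, 1)` at `n = 0` and `(63, 41, 93)` at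
`n = 1`. However, from `n = 1` on the triple lies in the cone `t ≤ 2g`, `2g ≤ h`, which the
recursion maps into itself. It even sharpens the first inequality: comparing monomials with
`t ≤ 2g` and `2g ≤ h` gives `t < g` after one step, while `2g ≤ h` persists and implies `g < h`.
-/

namespace SierpinskiGasket

variable {R : Type*} [CommSemiring R]

/-- The recursion for the number `t` of spanning forests of `SG_2(n + 1)` with all three outmost
vertices in one tree; the arguments `x`, `y` are the counts `t`, `g` at level `n`. -/
def tStep (x y : R) : R :=
  6 * x ^ 2 * y + 3 * x * y ^ 2

/-- The recursion for the number `g` of spanning forests of `SG_2(n + 1)` with one given outmost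
vertex in one tree and the other two in another; the arguments `x`, `y`, `z` are the counts
`t`, `g`, `h` at level `n`. -/
def gStep (x y z : R) : R :=
  x ^ 2 * z + 2 * x * y * z + 7 * x * y ^ 2 + 4 * y ^ 3 + y ^ 2 * z

/-- The recursion for the number `h` of spanning forests of `SG_2(n + 1)` with the three outmost
vertices in three different trees; the arguments `x`, `y`, `z` are the counts `t`, `g`, `h` at
level `n`. -/
def hStep (x y z : R) : R :=
  12 * x * y * z + 14 * y ^ 3 + 24 * y ^ 2 * z + 9 * y * z ^ 2 + 3 * x * z ^ 2 + z ^ 3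

variable [PartialOrder R]

/-- The cone of triples `(x, y, z)`, standing for the counts `(t, g, h)` at one level, that is
invariant under the recursion. The condition `x ≤ 2 * y`, rather than `x ≤ y`, lets it contain the
triple `(63, 41, 93)` of level `1`. -/
structure InvariantCone (x y z : R) : Prop where
  nonneg : 0 ≤ x
  pos : 0 < y
  le_two_mul : x ≤ 2 * y
  two_mul_le : 2 * y ≤ z

namespace InvariantCone

variable [IsStrictOrderedRing R] {x y z : R}

theorem mid_lt_right (hc : InvariantCone x y z) : y < z :=
  (lt_mul_of_one_lt_left hc.pos one_lt_two).trans_le hc.two_mul_le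

theorem tStep_lt_gStep (hc : InvariantCone x y z) : tStep x y < gStep x y z := by
  obtain ⟨hx, hy, hxy, hyz⟩ := hc
  have hz : 0 ≤ z := le_trans (by positivity) hyz
  calc
    tStep x y = x ^ 2 * (2 * y) + x * x * (2 * y) + 2 * x * y * x + 3 * x * y ^ 2 := by
      unfold tStep; ring
    _ ≤ x ^ 2 * z + x * (2 * y) * z + 2 * x * y * (2 * y) + 3 * x * y ^ 2 := by gcongr
    _ < x ^ 2 * z + x * (2 * y) * z + 2 * x * y * (2 * y) + 3 * x * y ^ 2
        + (4 * y ^ 3 + y ^ 2 * z) := lt_add_of_pos_right _ (by positivity)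
    _ = gStep x y z := by unfold gStep; ring

theorem two_mul_gStep_le_hStep (hc : InvariantCone x y z) : 2 * gStep x y z ≤ hStep x y z := by
  obtain ⟨hx, hy, hxy, hyz⟩ := hc
  have hz : 0 ≤ z := le_trans (by positivity) hyz
  calc
    2 * gStep x y z
      = 2 * x * x * z + 4 * x * y * z + 4 * x * y * (2 * y) + 3 * x * y * (2 * y)
        + 8 * y ^ 3 + 2 * y ^ 2 * z := by unfold gStep; ring
    _ ≤ 2 * x * (2 * y) * z + 4 * x * y * z + 4 * x * y * z + 3 * (2 * y) * y * z
        + 8 * y ^ 3 + 2 * y ^ 2 * z := by gcongr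
    _ ≤ 2 * x * (2 * y) * z + 4 * x * y * z + 4 * x * y * z + 3 * (2 * y) * y * z
        + 8 * y ^ 3 + 2 * y ^ 2 * z
        + (6 * y ^ 3 + 16 * y ^ 2 * z + 9 * y * z ^ 2 + 3 * x * z ^ 2 + z ^ 3) :=
      le_add_of_nonneg_right (by positivity)
    _ = hStep x y z := by unfold hStep; ring

theorem step (hc : InvariantCone x y z) :
    InvariantCone (tStep x y) (gStep x y z) (hStep x y z) := by
  have nonneg : 0 ≤ tStep x y := by
    obtain ⟨hx, hy, -, -⟩ := hc
    unfold tStep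
    positivity
  have pos : 0 < gStep x y z := nonneg.trans_lt hc.tStep_lt_gStep
  exact
    { nonneg
      pos
      le_two_mul := hc.tStep_lt_gStep.le.trans (le_mul_of_one_le_left pos.le one_le_two)
      two_mul_le := hc.two_mul_gStep_le_hStep }

end InvariantCone

end SierpinskiGasket

open SierpinskiGasket

theorem sg2_t_lt_g_lt_h_general {R : Type*} [CommSemiring R] [PartialOrder R]
    [IsStrictOrderedRing R] {t g h : ℕ → R}
    (ht : ∀ n, t (n + 1) = tStep (t n) (g n))
    (hg : ∀ n, g (n + 1) = gStep (t n) (g n) (h n))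
    (hh : ∀ n, h (n + 1) = hStep (t n) (g n) (h n))
    {m : ℕ} (hm : InvariantCone (t m) (g m) (h m)) {n : ℕ} (hn : m < n) :
    t n < g n ∧ g n < h n := by
  have cone (k : ℕ) (hk : m ≤ k) : InvariantCone (t k) (g k) (h k) := by
    induction k, hk using Nat.le_induction with
    | base => exact hm
    | succ k _ ih => simpa only [ht, hg, hh] using ih.step
  refine ⟨?_, (cone n hn.le).mid_lt_right⟩
  obtain ⟨k, rfl⟩ := Nat.exists_eq_succ_of_ne_zero (Nat.ne_zero_of_lt hn)
  simpa only [ht, hg] using (cone k (Nat.le_of_lt_succ hn)).tStep_lt_gStep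

/-- For `n ≥ 2`, one has `t(n) < g(n) < h(n)`. -/
theorem sg2_t_lt_g_lt_h
    (t g h f : ℕ → ℕ)
    (ht0 : t 0 = 3) (hg0 : g 0 = 1) (hh0 : h 0 = 1)
    (ht : ∀ n, t (n + 1) = 6 * t n ^ 2 * g n + 3 * t n * g n ^ 2)
    (hg : ∀ n, g (n + 1) = t n ^ 2 * h n + 2 * t n * g n * h n + 7 * t n * g n ^ 2
        + 4 * g n ^ 3 + g n ^ 2 * h n)
    (hh : ∀ n, h (n + 1) = 12 * t n * g n * h n + 14 * g n ^ 3 + 24 * g n ^ 2 * h n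
        + 9 * g n * h n ^ 2 + 3 * t n * h n ^ 2 + h n ^ 3)
    (hf : ∀ n, f n = t n + 3 * g n + h n) :
    ∀ n, 2 ≤ n → t n < g n ∧ g n < h n := by
  have cone_one : InvariantCone (t 1) (g 1) (h 1) := by
    constructor <;> simp [ht 0, hg 0, hh 0, ht0, hg0, hh0]
  exact fun n hn ↦ sg2_t_lt_g_lt_h_general ht hg hh cone_one hn
end

section
/- For every natural number n ≥ 2, 4 · g(n+1) · h(n) < 3 · g(n) · h(n+1); in particular the ratio g(n)/h(n) decreases at least by a factor 3/4 at each step for n ≥ 2. -/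
/-!
The region `0 ≤ t ≤ 3 * g`, `0 < g`, `0 ≤ h` contains the initial triple `(3, 1, 1)` and is
preserved by the recursion. On this region the claim holds for each single step: in
`3 * g n * h (n + 1) - 4 * g (n + 1) * h n` the only negative monomial is `-4 * t ^ 2 * h ^ 2`.
By `t ≤ 3 * g` the positive terms in `t * g * h ^ 2` and `g ^ 2 * h ^ 2` offset all of it but
`10 * g ^ 2 * h ^ 2`, which `2 * (5 * g) * h ≤ (5 * g) ^ 2 + h ^ 2` moves into the terms in
`g ^ 3 * h` and `g * h ^ 3`.
-/

theorem four_mul_sq_mul_sq_le {R : Type*} [CommSemiring R] [LinearOrder R]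
    [IsStrictOrderedRing R] [ExistsAddOfLE R] {x y z : R} (hx : 0 ≤ x) (hy : 0 ≤ y) (hz : 0 ≤ z)
    (hxy : x ≤ 3 * y) :
    4 * x ^ 2 * z ^ 2 ≤ x * y * z ^ 2 + 23 * y ^ 2 * z ^ 2 + 25 * y ^ 3 * z + y * z ^ 3 := by
  have x_sq_le : 4 * x ^ 2 ≤ x * y + 33 * y ^ 2 :=
    calc 4 * x ^ 2 = 4 * x * x := by ring
      _ ≤ 4 * x * (3 * y) := by gcongr
      _ = x * y + 11 * y * x := by ring
      _ ≤ x * y + 11 * y * (3 * y) := by gcongr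
      _ = x * y + 33 * y ^ 2 := by ring
  calc 4 * x ^ 2 * z ^ 2 ≤ (x * y + 33 * y ^ 2) * z ^ 2 := by gcongr
    _ = x * y * z ^ 2 + 23 * y ^ 2 * z ^ 2 + 2 * (5 * y) * z * (y * z) := by ring
    _ ≤ x * y * z ^ 2 + 23 * y ^ 2 * z ^ 2 + ((5 * y) ^ 2 + z ^ 2) * (y * z) := by
        gcongr
        exact two_mul_le_add_sq (5 * y) z
    _ = x * y * z ^ 2 + 23 * y ^ 2 * z ^ 2 + 25 * y ^ 3 * z + y * z ^ 3 := by ring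

/-- The recursion satisfied by the numbers `t`, `g`, `h` of spanning forests on the
two-dimensional Sierpinski gasket, sorted by how the outmost vertices are joined. The initial
values are left free, and the values lie in any commutative semiring. -/
structure IsSpanningForestRecursion {R : Type*} [CommSemiring R] (t g h : ℕ → R) : Prop where
  t_succ : ∀ n, t (n + 1) = 6 * t n ^ 2 * g n + 3 * t n * g n ^ 2
  g_succ : ∀ n, g (n + 1) = t n ^ 2 * h n + 2 * t n * g n * h n + 7 * t n * g n ^ 2
    + 4 * g n ^ 3 + g n ^ 2 * h n
  h_succ : ∀ n, h (n + 1) = 12 * t n * g n * h n + 14 * g n ^ 3 + 24 * g n ^ 2 * h n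
    + 9 * g n * h n ^ 2 + 3 * t n * h n ^ 2 + h n ^ 3

namespace IsSpanningForestRecursion

section

variable {R : Type*} [CommSemiring R] [PartialOrder R] [IsStrictOrderedRing R] {t g h : ℕ → R}

theorem t_nonneg_g_pos_h_nonneg (H : IsSpanningForestRecursion t g h)
    (ht₀ : 0 ≤ t 0) (hg₀ : 0 < g 0) (hh₀ : 0 ≤ h 0) (n : ℕ) :
    0 ≤ t n ∧ 0 < g n ∧ 0 ≤ h n := by
  induction n with
  | zero => exact ⟨ht₀, hg₀, hh₀⟩
  | succ n ih =>
    obtain ⟨ht, hg, hh⟩ := ih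
    rw [H.t_succ, H.g_succ, H.h_succ]
    refine ⟨?_, ?_, ?_⟩ <;> positivity

theorem t_succ_le_three_mul_g_succ (H : IsSpanningForestRecursion t g h) {n : ℕ}
    (ht : 0 ≤ t n) (hg : 0 ≤ g n) (hh : 0 ≤ h n) (htg : t n ≤ 3 * g n) :
    t (n + 1) ≤ 3 * g (n + 1) := by
  calc t (n + 1) = 6 * t n * g n * t n + 3 * t n * g n ^ 2 := by rw [H.t_succ]; ring
    _ ≤ 6 * t n * g n * (3 * g n) + 3 * t n * g n ^ 2 := by gcongr
    _ = 3 * (7 * t n * g n ^ 2) := by ring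
    _ ≤ 3 * (7 * t n * g n ^ 2
          + (t n ^ 2 * h n + 2 * t n * g n * h n + 4 * g n ^ 3 + g n ^ 2 * h n)) := by
        gcongr
        exact le_add_of_nonneg_right (by positivity)
    _ = 3 * g (n + 1) := by rw [H.g_succ]; ring

theorem t_le_three_mul_g (H : IsSpanningForestRecursion t g h)
    (ht₀ : 0 ≤ t 0) (hg₀ : 0 < g 0) (hh₀ : 0 ≤ h 0) (htg₀ : t 0 ≤ 3 * g 0) (n : ℕ) :
    t n ≤ 3 * g n := by
  induction n with
  | zero => exact htg₀
  | succ n ih =>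
    obtain ⟨ht, hg, hh⟩ := H.t_nonneg_g_pos_h_nonneg ht₀ hg₀ hh₀ n
    exact H.t_succ_le_three_mul_g_succ ht hg.le hh ih

end

theorem four_mul_g_succ_mul_h_lt {R : Type*} [CommSemiring R] [LinearOrder R]
    [IsStrictOrderedRing R] [ExistsAddOfLE R] {t g h : ℕ → R}
    (H : IsSpanningForestRecursion t g h) {n : ℕ}
    (ht : 0 ≤ t n) (hg : 0 < g n) (hh : 0 ≤ h n) (htg : t n ≤ 3 * g n) :
    4 * g (n + 1) * h n < 3 * g n * h (n + 1) := by
  rw [H.g_succ, H.h_succ]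
  generalize t n = x, g n = y, h n = z at *
  calc 4 * (x ^ 2 * z + 2 * x * y * z + 7 * x * y ^ 2 + 4 * y ^ 3 + y ^ 2 * z) * z
    _ = 4 * x ^ 2 * z ^ 2
          + (8 * x * y * z ^ 2 + 28 * x * y ^ 2 * z + 16 * y ^ 3 * z + 4 * y ^ 2 * z ^ 2) := by
        ring
    _ ≤ x * y * z ^ 2 + 23 * y ^ 2 * z ^ 2 + 25 * y ^ 3 * z + y * z ^ 3
          + (8 * x * y * z ^ 2 + 28 * x * y ^ 2 * z + 16 * y ^ 3 * z + 4 * y ^ 2 * z ^ 2) := by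
        gcongr ?_ + _
        exact four_mul_sq_mul_sq_le ht hg.le hh htg
    _ < x * y * z ^ 2 + 23 * y ^ 2 * z ^ 2 + 25 * y ^ 3 * z + y * z ^ 3
          + (8 * x * y * z ^ 2 + 28 * x * y ^ 2 * z + 16 * y ^ 3 * z + 4 * y ^ 2 * z ^ 2)
          + (42 * y ^ 4 + 8 * x * y ^ 2 * z + 31 * y ^ 3 * z + 2 * y * z ^ 3) :=
        lt_add_of_pos_right _ (by positivity)
    _ = 3 * y * (12 * x * y * z + 14 * y ^ 3 + 24 * y ^ 2 * z + 9 * y * z ^ 2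
          + 3 * x * z ^ 2 + z ^ 3) := by
        ring

end IsSpanningForestRecursion

theorem sg2_g_over_h_decreasing_general {R : Type*} [CommSemiring R] [LinearOrder R]
    [IsStrictOrderedRing R] [ExistsAddOfLE R] {t g h : ℕ → R}
    (H : IsSpanningForestRecursion t g h)
    (ht₀ : 0 ≤ t 0) (hg₀ : 0 < g 0) (hh₀ : 0 ≤ h 0) (htg₀ : t 0 ≤ 3 * g 0) (n : ℕ) :
    4 * g (n + 1) * h n < 3 * g n * h (n + 1) := by
  obtain ⟨ht, hg, hh⟩ := H.t_nonneg_g_pos_h_nonneg ht₀ hg₀ hh₀ n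
  exact H.four_mul_g_succ_mul_h_lt ht hg hh (H.t_le_three_mul_g ht₀ hg₀ hh₀ htg₀ n)

/-- For `n ≥ 2`, the ratio `g(n)/h(n)` decreases at least by a factor 3/4:
`4 * g(n+1) * h(n) < 3 * g(n) * h(n+1)`. -/
theorem sg2_g_over_h_decreasing
    (t g h f : ℕ → ℕ)
    (ht0 : t 0 = 3) (hg0 : g 0 = 1) (hh0 : h 0 = 1)
    (ht : ∀ n, t (n + 1) = 6 * t n ^ 2 * g n + 3 * t n * g n ^ 2)
    (hg : ∀ n, g (n + 1) = t n ^ 2 * h n + 2 * t n * g n * h n + 7 * t n * g n ^ 2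
        + 4 * g n ^ 3 + g n ^ 2 * h n)
    (hh : ∀ n, h (n + 1) = 12 * t n * g n * h n + 14 * g n ^ 3 + 24 * g n ^ 2 * h n
        + 9 * g n * h n ^ 2 + 3 * t n * h n ^ 2 + h n ^ 3)
    (hf : ∀ n, f n = t n + 3 * g n + h n) :
    ∀ n, 2 ≤ n → 4 * g (n + 1) * h n < 3 * g n * h (n + 1) := by
  intro n _
  exact sg2_g_over_h_decreasing_general ⟨ht, hg, hh⟩ (by simp) (by simp [hg0]) (by simp)
    (by simp [ht0, hg0]) n
end

section
/- The ratios t(n)/g(n) and g(n)/h(n) both tend to 0 as n → ∞. -/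
open Filter

/-!
Each step of the recursion multiplies `t / g` by at most `6 / 7`, because the terms `7 t g² + 4 g³`
of the recursion for `g` already dominate the recursion for `t`. So `t / g → 0`, in particular
`t ≤ 2 g` from some point on, and from there each step multiplies `g / h` by at most `3 / 5`.
-/

theorem tendsto_zero_of_eventually_succ_le_mul {u : ℕ → ℝ} {c : ℝ} (hc : c < 1)
    (hu : ∀ n, 0 ≤ u n) (hstep : ∀ᶠ n in atTop, u (n + 1) ≤ c * u n) :
    Tendsto u atTop (nhds 0) :=
  (summable_of_ratio_norm_eventually_le hc <| by
    simpa only [Real.norm_of_nonneg (hu _)] using hstep).tendsto_atTop_zero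

/-- The simultaneous recursion for the numbers `t`, `g`, `h` of spanning forests on the Sierpinski
gaskets `SG₂(n)`, by the way the three outmost vertices are joined. The initial values are left
free. -/
structure SG2Recursion {R : Type*} [Semiring R] (t g h : ℕ → R) : Prop where
  t_succ (n : ℕ) : t (n + 1) = 6 * t n ^ 2 * g n + 3 * t n * g n ^ 2
  g_succ (n : ℕ) : g (n + 1) = t n ^ 2 * h n + 2 * t n * g n * h n + 7 * t n * g n ^ 2
    + 4 * g n ^ 3 + g n ^ 2 * h n
  h_succ (n : ℕ) : h (n + 1) = 12 * t n * g n * h n + 14 * g n ^ 3 + 24 * g n ^ 2 * h n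
    + 9 * g n * h n ^ 2 + 3 * t n * h n ^ 2 + h n ^ 3

namespace SG2Recursion

theorem t_nonneg_and_g_pos_and_h_pos {R : Type*} [Semiring R] [PartialOrder R]
    [IsStrictOrderedRing R] {t g h : ℕ → R} (hrec : SG2Recursion t g h) (ht₀ : 0 ≤ t 0)
    (hg₀ : 0 < g 0) (hh₀ : 0 < h 0) (n : ℕ) : 0 ≤ t n ∧ 0 < g n ∧ 0 < h n := by
  induction n with
  | zero => exact ⟨ht₀, hg₀, hh₀⟩
  | succ n ih =>
    obtain ⟨ht, hg, hh⟩ := ih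
    rw [hrec.t_succ, hrec.g_succ, hrec.h_succ]
    exact ⟨by positivity, by positivity, by positivity⟩

section Field

variable {K : Type*} [Field K] [LinearOrder K] [IsStrictOrderedRing K] {t g h : ℕ → K} {n : ℕ}

theorem t_div_g_succ_le (hrec : SG2Recursion t g h) (ht : 0 ≤ t n) (hg : 0 < g n) (hh : 0 ≤ h n) :
    t (n + 1) / g (n + 1) ≤ 6 / 7 * (t n / g n) := by
  have hg' : 0 < g (n + 1) := by rw [hrec.g_succ]; positivity
  have g_succ_ge : 7 * t n * g n ^ 2 + 4 * g n ^ 3 ≤ g (n + 1) := by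
    have : 0 ≤ (t n + g n) ^ 2 * h n := by positivity
    linear_combination this - hrec.g_succ n
  rw [div_mul_div_comm, div_le_div_iff₀ hg' (by positivity)]
  calc t (n + 1) * (7 * g n)
      = 6 * t n * (7 * t n * g n ^ 2 + 4 * g n ^ 3) - 3 * t n * g n ^ 3 := by
        rw [hrec.t_succ]; ring
    _ ≤ 6 * t n * (7 * t n * g n ^ 2 + 4 * g n ^ 3) := sub_le_self _ (by positivity)
    _ ≤ 6 * t n * g (n + 1) := by gcongr

theorem g_div_h_succ_le (hrec : SG2Recursion t g h) (ht : 0 ≤ t n) (hg : 0 ≤ g n) (hh : 0 < h n)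
    (htg : t n ≤ 2 * g n) : g (n + 1) / h (n + 1) ≤ 3 / 5 * (g n / h n) := by
  have hh' : 0 < h (n + 1) := by rw [hrec.h_succ]; positivity
  rw [div_mul_div_comm, div_le_div_iff₀ hh' (by positivity), ← sub_nonneg]
  have : 0 ≤ 2 * g n - t n := sub_nonneg.2 htg
  -- The only negative terms, `-t g h² - 5 t² h²`, are absorbed by `22 g² h²`.
  calc 0 ≤ (2 * g n - t n) * (11 * g n + 5 * t n) * h n ^ 2 + t n * g n ^ 2 * h n
        + 42 * g n ^ 4 + 52 * g n ^ 3 * h n + 3 * g n * h n ^ 3 := by positivity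
    _ = 3 * g n * h (n + 1) - g (n + 1) * (5 * h n) := by
        rw [hrec.g_succ, hrec.h_succ]; ring

end Field

end SG2Recursion

theorem sg2_ratios_tendsto_zero_general {t g h : ℕ → ℝ} (hrec : SG2Recursion t g h)
    (ht₀ : 0 ≤ t 0) (hg₀ : 0 < g 0) (hh₀ : 0 < h 0) :
    Tendsto (fun n => t n / g n) atTop (nhds 0) ∧
    Tendsto (fun n => g n / h n) atTop (nhds 0) := by
  choose ht hg hh using hrec.t_nonneg_and_g_pos_and_h_pos ht₀ hg₀ hh₀
  have t_div_g_tendsto : Tendsto (fun n => t n / g n) atTop (nhds 0) :=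
    tendsto_zero_of_eventually_succ_le_mul (by norm_num : (6 / 7 : ℝ) < 1)
      (fun n => div_nonneg (ht n) (hg n).le)
      (.of_forall fun n => hrec.t_div_g_succ_le (ht n) (hg n) (hh n).le)
  refine ⟨t_div_g_tendsto, tendsto_zero_of_eventually_succ_le_mul (by norm_num : (3 / 5 : ℝ) < 1)
    (fun n => div_nonneg (hg n).le (hh n).le) ?_⟩
  filter_upwards [t_div_g_tendsto.eventually_le_const two_pos] with n hn
  exact hrec.g_div_h_succ_le (ht n) (hg n).le (hh n) ((div_le_iff₀ (hg n)).1 hn)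

/-- The ratios `t(n)/g(n)` and `g(n)/h(n)` both tend to 0 as `n → ∞`. -/
theorem sg2_ratios_tendsto_zero
    (t g h f : ℕ → ℕ)
    (ht0 : t 0 = 3) (hg0 : g 0 = 1) (hh0 : h 0 = 1)
    (ht : ∀ n, t (n + 1) = 6 * t n ^ 2 * g n + 3 * t n * g n ^ 2)
    (hg : ∀ n, g (n + 1) = t n ^ 2 * h n + 2 * t n * g n * h n + 7 * t n * g n ^ 2
        + 4 * g n ^ 3 + g n ^ 2 * h n)
    (hh : ∀ n, h (n + 1) = 12 * t n * g n * h n + 14 * g n ^ 3 + 24 * g n ^ 2 * h n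
        + 9 * g n * h n ^ 2 + 3 * t n * h n ^ 2 + h n ^ 3)
    (hf : ∀ n, f n = t n + 3 * g n + h n) :
    Tendsto (fun n => (t n : ℝ) / (g n : ℝ)) atTop (nhds 0) ∧
    Tendsto (fun n => (g n : ℝ) / (h n : ℝ)) atTop (nhds 0) :=
  sg2_ratios_tendsto_zero_general
    ⟨fun n => mod_cast ht n, fun n => mod_cast hg n, fun n => mod_cast hh n⟩
    (by simp) (by simp [hg0]) (by simp [hh0])
end

section
/- For every natural number n ≥ 1, h(n-1)^3 < h(n) < f(n) < f(n-1)^3; consequently for all integers 1 ≤ m ≤ n, h(m)^(3^(n-m)) ≤ h(n) < f(n) ≤ f(m)^(3^(n-m)). -/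
/-!
`SG_2(n + 1)` consists of three copies of `SG_2(n)`, any two of which share a corner. Spanning
forests of the copies always glue to a spanning subgraph of `SG_2(n + 1)`, and this is a forest
unless it contains a cycle through the three shared corners, that is, unless each copy connects the
two corners it shares with the others. In a single copy `t(n) + g(n)` forests do so, whence
`f(n)^3 = f(n + 1) + (t(n) + g(n))^3`. Conversely, gluing three forests that separate all corners
gives a forest that separates all corners, so `h(n)^3` is one of the terms of the recursion for
`h(n + 1)`.
-/

section IteratedPow

variable {M : Type*} [MonoidWithZero M] [Preorder M] [PosMulMono M] [MulPosMono M]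
  {u : ℕ → M} {d : ℕ}

theorem pow_pow_sub_le_of_pow_le_succ [ZeroLEOneClass M] (hstep : ∀ n, u n ^ d ≤ u (n + 1))
    {m n : ℕ} (hm : 0 ≤ u m) (hmn : m ≤ n) : u m ^ d ^ (n - m) ≤ u n := by
  induction n, hmn using Nat.le_induction with
  | base => simp
  | succ n hmn ih =>
    calc u m ^ d ^ (n + 1 - m) = (u m ^ d ^ (n - m)) ^ d := by
          rw [Nat.sub_add_comm hmn, pow_succ, pow_mul]
      _ ≤ u n ^ d := pow_le_pow_left₀ (pow_nonneg hm _) ih d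
      _ ≤ u (n + 1) := hstep n

theorem le_pow_pow_sub_of_succ_le_pow (hu : ∀ n, 0 ≤ u n) (hstep : ∀ n, u (n + 1) ≤ u n ^ d)
    {m n : ℕ} (hmn : m ≤ n) : u n ≤ u m ^ d ^ (n - m) := by
  induction n, hmn using Nat.le_induction with
  | base => simp
  | succ n hmn ih =>
    calc u (n + 1) ≤ u n ^ d := hstep n
      _ ≤ (u m ^ d ^ (n - m)) ^ d := pow_le_pow_left₀ (hu n) ih d
      _ = u m ^ d ^ (n + 1 - m) := by rw [Nat.sub_add_comm hmn, pow_succ, pow_mul]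

end IteratedPow

/-- The recursion satisfied by the numbers of spanning forests of `SG_2(n)`, sorted by the partition
they induce on the three corners: `t` for one block, `g` for a given partition into two blocks
(one of three, which are equinumerous by symmetry), `h` for three blocks. The values at `0` are left
free, and the sequences may take values in any semiring. -/
structure SierpinskiForestRecursion {R : Type*} [Semiring R] (t g h : ℕ → R) : Prop where
  t_succ : ∀ n, t (n + 1) = 6 * t n ^ 2 * g n + 3 * t n * g n ^ 2
  g_succ : ∀ n, g (n + 1) = t n ^ 2 * h n + 2 * t n * g n * h n + 7 * t n * g n ^ 2
    + 4 * g n ^ 3 + g n ^ 2 * h n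
  h_succ : ∀ n, h (n + 1) = 12 * t n * g n * h n + 14 * g n ^ 3 + 24 * g n ^ 2 * h n
    + 9 * g n * h n ^ 2 + 3 * t n * h n ^ 2 + h n ^ 3

namespace SierpinskiForestRecursion

theorem total_succ_add_cube {R : Type*} [CommSemiring R] {t g h : ℕ → R}
    (H : SierpinskiForestRecursion t g h) (n : ℕ) :
    (t (n + 1) + 3 * g (n + 1) + h (n + 1)) + (t n + g n) ^ 3
      = (t n + 3 * g n + h n) ^ 3 := by
  rw [H.t_succ, H.g_succ, H.h_succ]
  ring

variable {R : Type*} [Semiring R] [PartialOrder R] [IsStrictOrderedRing R] {t g h : ℕ → R}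

theorem t_nonneg_and_g_pos_and_h_nonneg (H : SierpinskiForestRecursion t g h)
    (ht0 : 0 ≤ t 0) (hg0 : 0 < g 0) (hh0 : 0 ≤ h 0) (n : ℕ) :
    0 ≤ t n ∧ 0 < g n ∧ 0 ≤ h n := by
  induction n with
  | zero => exact ⟨ht0, hg0, hh0⟩
  | succ n ih =>
    obtain ⟨ht, hg, hh⟩ := ih
    rw [H.t_succ, H.g_succ, H.h_succ]
    exact ⟨by positivity, by positivity, by positivity⟩

theorem h_cube_lt_h_succ (H : SierpinskiForestRecursion t g h) {n : ℕ}
    (ht : 0 ≤ t n) (hg : 0 < g n) (hh : 0 ≤ h n) : h n ^ 3 < h (n + 1) := by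
  rw [H.h_succ]
  exact lt_add_of_pos_left _ (by positivity)

end SierpinskiForestRecursion

theorem sg2_bounds_general {R : Type*} [CommSemiring R] [PartialOrder R] [IsStrictOrderedRing R]
    {t g h f : ℕ → R} (H : SierpinskiForestRecursion t g h)
    (hf : ∀ n, f n = t n + 3 * g n + h n)
    (ht0 : 0 ≤ t 0) (hg0 : 0 < g 0) (hh0 : 0 ≤ h 0) :
    (∀ n, 1 ≤ n → h (n - 1) ^ 3 < h n ∧ h n < f n ∧ f n < f (n - 1) ^ 3) ∧
    (∀ m n, m ≤ n →
      h m ^ 3 ^ (n - m) ≤ h n ∧ h n < f n ∧ f n ≤ f m ^ 3 ^ (n - m)) := by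
  have hpos := H.t_nonneg_and_g_pos_and_h_nonneg ht0 hg0 hh0
  have h_nonneg (n) : 0 ≤ h n := (hpos n).2.2
  have h_step (n) : h n ^ 3 < h (n + 1) :=
    H.h_cube_lt_h_succ (hpos n).1 (hpos n).2.1 (hpos n).2.2
  have h_lt_f (n) : h n < f n := by
    obtain ⟨ht, hg, -⟩ := hpos n
    exact hf n ▸ lt_add_of_pos_left _ (by positivity)
  have f_step (n) : f (n + 1) < f n ^ 3 := by
    obtain ⟨ht, hg, -⟩ := hpos n
    rw [hf, hf, ← H.total_succ_add_cube]
    exact lt_add_of_pos_right _ (by positivity)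
  have f_nonneg (n) : 0 ≤ f n := (h_nonneg n).trans (h_lt_f n).le
  refine ⟨fun n hn ↦ ?_, fun m n hmn ↦ ⟨?_, h_lt_f n, ?_⟩⟩
  · obtain ⟨k, rfl⟩ := Nat.exists_eq_add_of_le' hn
    exact ⟨h_step k, h_lt_f (k + 1), f_step k⟩
  · exact pow_pow_sub_le_of_pow_le_succ (fun k ↦ (h_step k).le) (h_nonneg m) hmn
  · exact le_pow_pow_sub_of_succ_le_pow f_nonneg (fun k ↦ (f_step k).le) hmn

/-- For `n ≥ 1`, `h(n-1)^3 < h(n) < f(n) < f(n-1)^3`; consequently for `1 ≤ m ≤ n`,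
`h(m)^(3^(n-m)) ≤ h(n) < f(n) ≤ f(m)^(3^(n-m))`. -/
theorem sg2_bounds
    (t g h f : ℕ → ℕ)
    (ht0 : t 0 = 3) (hg0 : g 0 = 1) (hh0 : h 0 = 1)
    (ht : ∀ n, t (n + 1) = 6 * t n ^ 2 * g n + 3 * t n * g n ^ 2)
    (hg : ∀ n, g (n + 1) = t n ^ 2 * h n + 2 * t n * g n * h n + 7 * t n * g n ^ 2
        + 4 * g n ^ 3 + g n ^ 2 * h n)
    (hh : ∀ n, h (n + 1) = 12 * t n * g n * h n + 14 * g n ^ 3 + 24 * g n ^ 2 * h n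
        + 9 * g n * h n ^ 2 + 3 * t n * h n ^ 2 + h n ^ 3)
    (hf : ∀ n, f n = t n + 3 * g n + h n) :
    (∀ n, 1 ≤ n → h (n - 1) ^ 3 < h n ∧ h n < f n ∧ f n < f (n - 1) ^ 3) ∧
    (∀ m n, 1 ≤ m → m ≤ n →
      h m ^ 3 ^ (n - m) ≤ h n ∧ h n < f n ∧ f n ≤ f m ^ 3 ^ (n - m)) := by
  obtain ⟨hstep, hiter⟩ :=
    sg2_bounds_general ⟨ht, hg, hh⟩ hf (Nat.zero_le _) (by simp [hg0]) (Nat.zero_le _)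
  exact ⟨hstep, fun m n _ ↦ hiter m n⟩
end

section
/- The limit z := lim_{n→∞} (2 ln f(n)) / (3 (3^n + 1)) exists, and for every integer m ≥ 1 it satisfies the strict bounds (2/3^(m+1)) · ln h(m) < z < (2/3^(m+1)) · ln f(m). -/
open Filter

/-!
Three copies of `SG_2(n)`, glued at three vertices, form `SG_2(n + 1)`. Gluing three spanning
forests that separate the outer vertices of their copies gives a spanning forest that separates the
outer vertices, and not all such forests arise this way, so `h n ^ 3 < h (n + 1)`. Every spanning
forest of `SG_2(n + 1)` restricts to a spanning forest of each copy, and gluing three spanning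
forests creates a cycle exactly when each of them connects the two glued vertices of its copy, as
`t n + g n` forests do; hence, with `f = t + 3 g + h`, `f n ^ 3 = f (n + 1) + (t n + g n) ^ 3`.

So `log (h n) / 3 ^ n` increases strictly and `log (f n) / 3 ^ n` decreases strictly. As `h ≤ f`,
the latter converges, to a limit strictly between all terms of the two sequences.
-/

open Topology

theorem exists_tendsto_of_strictMono_of_strictAnti {ι α : Type*} [SemilatticeSup ι] [Nonempty ι]
    [NoMaxOrder ι] [ConditionallyCompleteLattice α] [TopologicalSpace α] [InfConvergenceClass α]
    {a b : ι → α} (ha : StrictMono a) (hb : StrictAnti b) (hab : a ≤ b) :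
    ∃ L, Tendsto b atTop (𝓝 L) ∧ ∀ i, a i < L ∧ L < b i := by
  have hle : ∀ i j, a i ≤ b j := ha.monotone.forall_le_of_antitone hb.antitone hab
  have hbdd : BddBelow (Set.range b) :=
    ⟨a (Classical.arbitrary ι), Set.forall_mem_range.2 (hle _)⟩
  refine ⟨⨅ i, b i, tendsto_atTop_ciInf hb.antitone hbdd, fun i ↦ ?_⟩
  obtain ⟨j, hij⟩ := exists_gt i
  exact ⟨(ha hij).trans_le (le_ciInf (hle j)), (ciInf_le hbdd j).trans_lt (hb hij)⟩

theorem strictMono_log_div_pow {k : ℕ} {u : ℕ → ℝ} (hk : k ≠ 0) (hu : ∀ n, 0 < u n)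
    (h : ∀ n, u n ^ k < u (n + 1)) : StrictMono fun n ↦ Real.log (u n) / (k : ℝ) ^ n := by
  refine strictMono_nat_of_lt_succ fun n ↦ ?_
  have hk' : (k : ℝ) ≠ 0 := Nat.cast_ne_zero.2 hk
  calc Real.log (u n) / (k : ℝ) ^ n = Real.log (u n ^ k) / (k : ℝ) ^ (n + 1) := by
        rw [Real.log_pow, pow_succ', mul_div_mul_left _ _ hk']
    _ < Real.log (u (n + 1)) / (k : ℝ) ^ (n + 1) := by
        gcongr
        · exact pow_pos (hu n) k
        · exact h n

theorem strictAnti_log_div_pow {k : ℕ} {u : ℕ → ℝ} (hk : k ≠ 0) (hu : ∀ n, 0 < u n)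
    (h : ∀ n, u (n + 1) < u n ^ k) : StrictAnti fun n ↦ Real.log (u n) / (k : ℝ) ^ n := by
  have hinv : ∀ n, (u n)⁻¹ ^ k < (u (n + 1))⁻¹ := fun n ↦ by
    rw [inv_pow]
    exact inv_strictAnti₀ (hu (n + 1)) (h n)
  simpa [neg_div] using (strictMono_log_div_pow hk (fun n ↦ inv_pos.2 (hu n)) hinv).neg

theorem exists_tendsto_log_div_pow {k : ℕ} {l u : ℕ → ℝ} (hk : k ≠ 0) (hl : ∀ n, 0 < l n)
    (hlu : ∀ n, l n ≤ u n) (hl_succ : ∀ n, l n ^ k < l (n + 1))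
    (hu_succ : ∀ n, u (n + 1) < u n ^ k) :
    ∃ L, Tendsto (fun n ↦ Real.log (u n) / (k : ℝ) ^ n) atTop (𝓝 L) ∧
      ∀ n, Real.log (l n) / (k : ℝ) ^ n < L ∧ L < Real.log (u n) / (k : ℝ) ^ n :=
  exists_tendsto_of_strictMono_of_strictAnti (strictMono_log_div_pow hk hl hl_succ)
    (strictAnti_log_div_pow hk (fun n ↦ (hl n).trans_le (hlu n)) hu_succ) fun n ↦
      div_le_div_of_nonneg_right (Real.log_le_log (hl n) (hlu n)) (by positivity)

theorem tendsto_div_add_const {ι 𝕜 : Type*} [Field 𝕜] [LinearOrder 𝕜] [IsStrictOrderedRing 𝕜]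
    [TopologicalSpace 𝕜] [OrderTopology 𝕜] {F : Filter ι} {x y : ι → 𝕜} {L : 𝕜}
    (hy : Tendsto y F atTop) (c : 𝕜) (hx : Tendsto (fun i ↦ x i / y i) F (𝓝 L)) :
    Tendsto (fun i ↦ x i / (y i + c)) F (𝓝 L) := by
  have hc : Tendsto (fun i ↦ 1 + c / y i) F (𝓝 1) := by
    simpa using (hy.const_div_atTop c).const_add 1
  have hdiv : Tendsto (fun i ↦ x i / y i / (1 + c / y i)) F (𝓝 L) := by
    simpa [Pi.div_def] using hx.div hc one_ne_zero
  refine hdiv.congr' ?_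
  filter_upwards [hy.eventually_ne_atTop 0] with i hi
  rw [div_div, mul_add, mul_one, mul_div_cancel₀ _ hi]

/-- The recursion for the numbers of spanning forests of `SG_2(n)`, classified by how they connect
the three outer vertices: `t n` for all three in one tree, `g n` for two given ones in one tree and
the third in another, `h n` for three different trees. The initial values are left free. -/
structure IsSG2Recursion {R : Type*} [CommSemiring R] (t g h : ℕ → R) : Prop where
  t_succ : ∀ n, t (n + 1) = 6 * t n ^ 2 * g n + 3 * t n * g n ^ 2
  g_succ : ∀ n, g (n + 1) = t n ^ 2 * h n + 2 * t n * g n * h n + 7 * t n * g n ^ 2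
    + 4 * g n ^ 3 + g n ^ 2 * h n
  h_succ : ∀ n, h (n + 1) = 12 * t n * g n * h n + 14 * g n ^ 3 + 24 * g n ^ 2 * h n
    + 9 * g n * h n ^ 2 + 3 * t n * h n ^ 2 + h n ^ 3

namespace IsSG2Recursion

theorem map {R S : Type*} [CommSemiring R] [CommSemiring S] {t g h : ℕ → R}
    (H : IsSG2Recursion t g h) (φ : R →+* S) : IsSG2Recursion (φ ∘ t) (φ ∘ g) (φ ∘ h) where
  t_succ n := by simp [H.t_succ, map_ofNat φ]
  g_succ n := by simp [H.g_succ, map_ofNat φ]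
  h_succ n := by simp [H.h_succ, map_ofNat φ]

theorem total_pow_three {R : Type*} [CommSemiring R] {t g h : ℕ → R} (H : IsSG2Recursion t g h)
    (n : ℕ) : (t n + 3 * g n + h n) ^ 3 =
      t (n + 1) + 3 * g (n + 1) + h (n + 1) + (t n + g n) ^ 3 := by
  rw [H.t_succ, H.g_succ, H.h_succ]
  ring

section Order

variable {R : Type*} [CommSemiring R] [PartialOrder R] [IsStrictOrderedRing R] {t g h : ℕ → R}

theorem nonneg_pos_pos (H : IsSG2Recursion t g h) (ht : 0 ≤ t 0) (hg : 0 < g 0) (hh : 0 < h 0)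
    (n : ℕ) : 0 ≤ t n ∧ 0 < g n ∧ 0 < h n := by
  induction n with
  | zero => exact ⟨ht, hg, hh⟩
  | succ n ih =>
    obtain ⟨htn, hgn, hhn⟩ := ih
    rw [H.t_succ, H.g_succ, H.h_succ]
    exact ⟨by positivity, by positivity, by positivity⟩

theorem h_pow_three_lt (H : IsSG2Recursion t g h) {n : ℕ} (ht : 0 ≤ t n) (hg : 0 < g n)
    (hh : 0 ≤ h n) : h n ^ 3 < h (n + 1) := by
  rw [H.h_succ]
  exact lt_add_of_pos_left _ (by positivity)

theorem total_succ_lt (H : IsSG2Recursion t g h) {n : ℕ} (htg : 0 < t n + g n) :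
    t (n + 1) + 3 * g (n + 1) + h (n + 1) < (t n + 3 * g n + h n) ^ 3 := by
  rw [H.total_pow_three]
  exact lt_add_of_pos_right _ (pow_pos htg 3)

end Order

end IsSG2Recursion

theorem sg2_growth_constant_bounds_general {t g h : ℕ → ℝ} (H : IsSG2Recursion t g h)
    (ht : 0 ≤ t 0) (hg : 0 < g 0) (hh : 0 < h 0) :
    ∃ z : ℝ,
      Tendsto (fun n ↦ 2 * Real.log (t n + 3 * g n + h n) / (3 * ((3 : ℝ) ^ n + 1))) atTop (𝓝 z) ∧
      ∀ m : ℕ,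
        2 / (3 : ℝ) ^ (m + 1) * Real.log (h m) < z ∧
        z < 2 / (3 : ℝ) ^ (m + 1) * Real.log (t m + 3 * g m + h m) := by
  have hpos := H.nonneg_pos_pos ht hg hh
  have hle (n : ℕ) : h n ≤ t n + 3 * g n + h n := by linarith [(hpos n).1, (hpos n).2.1]
  have hlower (n : ℕ) : h n ^ 3 < h (n + 1) :=
    H.h_pow_three_lt (hpos n).1 (hpos n).2.1 (hpos n).2.2.le
  have hupper (n : ℕ) : t (n + 1) + 3 * g (n + 1) + h (n + 1) < (t n + 3 * g n + h n) ^ 3 :=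
    H.total_succ_lt (add_pos_of_nonneg_of_pos (hpos n).1 (hpos n).2.1)
  obtain ⟨L, hlim, hbounds⟩ :=
    exists_tendsto_log_div_pow three_ne_zero (fun n ↦ (hpos n).2.2) hle hlower hupper
  push_cast at hlim hbounds
  refine ⟨2 / 3 * L, ?_, fun m ↦ ?_⟩
  · have h3 : Tendsto (fun n : ℕ ↦ (3 : ℝ) ^ n) atTop atTop :=
      tendsto_pow_atTop_atTop_of_one_lt (by norm_num)
    simpa only [mul_div_mul_comm] using
      (tendsto_div_add_const h3 1 hlim).const_mul (2 / 3)
  · have hscale (x : ℝ) : 2 / (3 : ℝ) ^ (m + 1) * x = 2 / 3 * (x / 3 ^ m) := by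
      rw [pow_succ]
      ring
    rw [hscale, hscale]
    exact ⟨by linarith [(hbounds m).1], by linarith [(hbounds m).2]⟩

/-- The asymptotic growth constant `z = lim 2 ln f(n) / (3 (3^n + 1))` exists and satisfies
`(2/3^(m+1)) ln h(m) < z < (2/3^(m+1)) ln f(m)` for every `m ≥ 1`. -/
theorem sg2_growth_constant_bounds
    (t g h f : ℕ → ℕ)
    (ht0 : t 0 = 3) (hg0 : g 0 = 1) (hh0 : h 0 = 1)
    (ht : ∀ n, t (n + 1) = 6 * t n ^ 2 * g n + 3 * t n * g n ^ 2)
    (hg : ∀ n, g (n + 1) = t n ^ 2 * h n + 2 * t n * g n * h n + 7 * t n * g n ^ 2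
        + 4 * g n ^ 3 + g n ^ 2 * h n)
    (hh : ∀ n, h (n + 1) = 12 * t n * g n * h n + 14 * g n ^ 3 + 24 * g n ^ 2 * h n
        + 9 * g n * h n ^ 2 + 3 * t n * h n ^ 2 + h n ^ 3)
    (hf : ∀ n, f n = t n + 3 * g n + h n) :
    ∃ z : ℝ,
      Tendsto (fun n : ℕ => 2 * Real.log (f n) / (3 * ((3 : ℝ) ^ n + 1))) atTop (nhds z) ∧
      ∀ m : ℕ, 1 ≤ m →
        2 / (3 : ℝ) ^ (m + 1) * Real.log (h m) < z ∧
        z < 2 / (3 : ℝ) ^ (m + 1) * Real.log (f m) := by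
  obtain ⟨z, hlim, hbounds⟩ := sg2_growth_constant_bounds_general
    (IsSG2Recursion.map ⟨ht, hg, hh⟩ (Nat.castRingHom ℝ)) (by simp) (by simp [hg0]) (by simp [hh0])
  exact ⟨z, by simpa [hf] using hlim, fun m _ ↦ by simpa [hf] using hbounds m⟩
end

section
/- The sequence (t(n) + g(n)) / f(n) of real numbers is strictly decreasing in n, and 0 ≤ (t(n) + g(n)) / f(n) < 1 for all n. -/
/-!
The sum `t n + g n` counts the forests that connect two given outmost vertices, so the quotient is
a connection probability. The recursion factors this sum exactly: it gets multiplied by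
`m n = (t n + g n) * h n + 2 * g n * (3 * t n + 2 * g n)`. The total `t n + 3 * g n + h n` gets
multiplied by the same `m n`, but in addition gains a positive amount. Hence the quotient drops
at every step, whatever the initial values in the cone `0 ≤ t`, `0 < g`, `0 ≤ h`, which the
recursion preserves.
-/

theorem strictAnti_div_of_succ {K : Type*} [Semifield K] [LinearOrder K] [IsStrictOrderedRing K]
    {u v m : ℕ → K} (hu : ∀ n, 0 < u n) (hv : ∀ n, 0 < v n)
    (hu_succ : ∀ n, u (n + 1) ≤ m n * u n) (hv_succ : ∀ n, m n * v n < v (n + 1)) :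
    StrictAnti fun n => u n / v n := by
  refine strictAnti_nat_of_succ_lt fun n => ?_
  rw [div_lt_div_iff₀ (hv (n + 1)) (hv n)]
  calc
    u (n + 1) * v n ≤ m n * u n * v n := mul_le_mul_of_nonneg_right (hu_succ n) (hv n).le
    _ = u n * (m n * v n) := by ring
    _ < u n * v (n + 1) := mul_lt_mul_of_pos_left (hv_succ n) (hu n)

/-- The recursion for spanning forests on the Sierpinski gaskets `SG_2(n)`, with arbitrary initial
values in a semiring: `t`, `g`, `h` stand for the forests that join all three outmost vertices,
exactly one prescribed pair of them, and no two of them. -/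
structure SG2ForestRecursion {R : Type*} [Semiring R] (t g h : ℕ → R) : Prop where
  t_succ : ∀ n, t (n + 1) = 6 * t n ^ 2 * g n + 3 * t n * g n ^ 2
  g_succ : ∀ n, g (n + 1) = t n ^ 2 * h n + 2 * t n * g n * h n + 7 * t n * g n ^ 2
    + 4 * g n ^ 3 + g n ^ 2 * h n
  h_succ : ∀ n, h (n + 1) = 12 * t n * g n * h n + 14 * g n ^ 3 + 24 * g n ^ 2 * h n
    + 9 * g n * h n ^ 2 + 3 * t n * h n ^ 2 + h n ^ 3

namespace SG2ForestRecursion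

theorem map {R S : Type*} [Semiring R] [Semiring S] {t g h : ℕ → R}
    (H : SG2ForestRecursion t g h) (φ : R →+* S) :
    SG2ForestRecursion (fun n => φ (t n)) (fun n => φ (g n)) fun n => φ (h n) where
  t_succ n := by simp [H.t_succ, map_ofNat φ]
  g_succ n := by simp [H.g_succ, map_ofNat φ]
  h_succ n := by simp [H.h_succ, map_ofNat φ]

section CommSemiring

variable {R : Type*} [CommSemiring R] {t g h : ℕ → R}

theorem connected_succ (H : SG2ForestRecursion t g h) (n : ℕ) :
    t (n + 1) + g (n + 1) =
      ((t n + g n) * h n + 2 * g n * (3 * t n + 2 * g n)) * (t n + g n) := by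
  rw [H.t_succ, H.g_succ]
  ring

theorem total_succ (H : SG2ForestRecursion t g h) (n : ℕ) :
    t (n + 1) + 3 * g (n + 1) + h (n + 1) =
      ((t n + g n) * h n + 2 * g n * (3 * t n + 2 * g n)) * (t n + 3 * g n + h n)
        + (2 * (t n + 2 * g n) ^ 2 * h n + 2 * g n ^ 2 * (t n + 7 * g n + 6 * h n)
          + h n ^ 2 * (2 * t n + 8 * g n + h n)) := by
  rw [H.t_succ, H.g_succ, H.h_succ]
  ring

end CommSemiring

section Ordered

variable {R : Type*} [CommSemiring R] [PartialOrder R] [IsStrictOrderedRing R] {t g h : ℕ → R}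

theorem nonneg_pos_nonneg (H : SG2ForestRecursion t g h)
    (ht0 : 0 ≤ t 0) (hg0 : 0 < g 0) (hh0 : 0 ≤ h 0) (n : ℕ) :
    0 ≤ t n ∧ 0 < g n ∧ 0 ≤ h n := by
  induction n with
  | zero => exact ⟨ht0, hg0, hh0⟩
  | succ n ih =>
    obtain ⟨ht, hg, hh⟩ := ih
    rw [H.t_succ, H.g_succ, H.h_succ]
    exact ⟨by positivity, by positivity, by positivity⟩

theorem mul_total_lt_total_succ (H : SG2ForestRecursion t g h) {n : ℕ}
    (ht : 0 ≤ t n) (hg : 0 < g n) (hh : 0 ≤ h n) :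
    ((t n + g n) * h n + 2 * g n * (3 * t n + 2 * g n)) * (t n + 3 * g n + h n) <
      t (n + 1) + 3 * g (n + 1) + h (n + 1) := by
  rw [H.total_succ]
  exact lt_add_of_pos_right _ (by positivity)

end Ordered

end SG2ForestRecursion

theorem sg2_alpha_beta_decreasing_general {K : Type*} [Semifield K] [LinearOrder K]
    [IsStrictOrderedRing K] {t g h f : ℕ → K} (H : SG2ForestRecursion t g h)
    (ht0 : 0 ≤ t 0) (hg0 : 0 < g 0) (hh0 : 0 ≤ h 0) (hf : ∀ n, f n = t n + 3 * g n + h n) :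
    StrictAnti (fun n => (t n + g n) / f n) ∧
    ∀ n, 0 ≤ (t n + g n) / f n ∧ (t n + g n) / f n < 1 := by
  have hcone := H.nonneg_pos_nonneg ht0 hg0 hh0
  have hconnected (n : ℕ) : 0 < t n + g n := add_pos_of_nonneg_of_pos (hcone n).1 (hcone n).2.1
  have hlt (n : ℕ) : t n + g n < f n := by
    obtain ⟨-, hg, hh⟩ := hcone n
    calc
      t n + g n < t n + g n + (2 * g n + h n) := lt_add_of_pos_right _ (by positivity)
      _ = f n := by rw [hf]; ring
  have hf_pos (n : ℕ) : 0 < f n := (hconnected n).trans (hlt n)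
  refine ⟨strictAnti_div_of_succ hconnected hf_pos (fun n => (H.connected_succ n).le) fun n => ?_,
    fun n => ⟨(div_pos (hconnected n) (hf_pos n)).le, (div_lt_one (hf_pos n)).2 (hlt n)⟩⟩
  obtain ⟨ht, hg, hh⟩ := hcone n
  simpa only [hf] using H.mul_total_lt_total_succ ht hg hh

/-- The real sequence `(t(n) + g(n)) / f(n)` is strictly decreasing and lies in `[0, 1)`. -/
theorem sg2_alpha_beta_decreasing
    (t g h f : ℕ → ℕ)
    (ht0 : t 0 = 3) (hg0 : g 0 = 1) (hh0 : h 0 = 1)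
    (ht : ∀ n, t (n + 1) = 6 * t n ^ 2 * g n + 3 * t n * g n ^ 2)
    (hg : ∀ n, g (n + 1) = t n ^ 2 * h n + 2 * t n * g n * h n + 7 * t n * g n ^ 2
        + 4 * g n ^ 3 + g n ^ 2 * h n)
    (hh : ∀ n, h (n + 1) = 12 * t n * g n * h n + 14 * g n ^ 3 + 24 * g n ^ 2 * h n
        + 9 * g n * h n ^ 2 + 3 * t n * h n ^ 2 + h n ^ 3)
    (hf : ∀ n, f n = t n + 3 * g n + h n) :
    StrictAnti (fun n : ℕ => ((t n : ℝ) + (g n : ℝ)) / (f n : ℝ)) ∧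
    ∀ n, 0 ≤ ((t n : ℝ) + (g n : ℝ)) / (f n : ℝ) ∧
      ((t n : ℝ) + (g n : ℝ)) / (f n : ℝ) < 1 := by
  have H := (SG2ForestRecursion.mk ht hg hh).map (Nat.castRingHom ℝ)
  exact sg2_alpha_beta_decreasing_general H (by simp) (by simp [hg0]) (by simp)
    fun n => by simp [hf]
end

section
/- Let z := lim_{n→∞} (2 ln f(n)) / (3 (3^n + 1)). For every integer m ≥ 1, (2/3^(m+1)) · ln f(m) − z ≤ −(1/3^(m+1)) · ln(1 − ((t(m) + g(m)) / f(m))^3). -/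
open Filter

/-!
Call a spanning forest of a gasket *linked* if two prescribed corners lie in the same tree; there
are `t n + g n` linked forests. Choosing a spanning forest in each of the three copies of stage `n`
inside stage `n + 1` gives a spanning forest unless each of them links its two junctions with the
other copies, which closes a cycle around the central hole:
`f (n + 1) = f n ^ 3 - (t n + g n) ^ 3`. The proportion `r n` of linked forests does not increase
with `n`, so `log (f (n + 1)) ≥ 3 * log (f n) + log (1 - r m ^ 3)` for all `n ≥ m`, and solving this
linear recursion from `m` to infinity bounds the growth constant from below.
-/

theorem tendsto_div_of_tendsto_div_add_const {ι K : Type*} [Field K] [LinearOrder K]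
    [IsStrictOrderedRing K] [TopologicalSpace K] [OrderTopology K] {l : Filter ι} {a w : ι → K}
    {c x : K} (hw : Tendsto w l atTop)
    (ha : Tendsto (fun i => a i / (w i + c)) l (nhds x)) :
    Tendsto (fun i => a i / w i) l (nhds x) := by
  have hquot : Tendsto (fun i => 1 + c / w i) l (nhds 1) := by
    simpa only [add_zero] using (hw.const_div_atTop c).const_add 1
  have hprod : Tendsto (fun i => a i / (w i + c) * (1 + c / w i)) l (nhds x) := by
    simpa only [mul_one] using ha.mul hquot
  refine hprod.congr' ?_
  filter_upwards [hw.eventually_ne_atTop 0,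
    (tendsto_atTop_add_const_right l c hw).eventually_ne_atTop 0] with i hwi hwci
  field_simp

section LinearRecursion

variable {K : Type*} [Field K] [LinearOrder K] [IsStrictOrderedRing K] {a : ℕ → K} {b u x : K}
  {m : ℕ}

theorem monotoneOn_add_div_sub_one_div_pow (hb : 1 < b)
    (ha : ∀ n, m ≤ n → b * a n + u ≤ a (n + 1)) :
    MonotoneOn (fun n => (a n + u / (b - 1)) / b ^ n) (Set.Ici m) := by
  have hb₀ : 0 < b := one_pos.trans hb
  refine monotoneOn_of_le_succ Set.ordConnected_Ici fun n _ hn _ => ?_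
  have hfix : b * (a n + u / (b - 1)) = b * a n + u + u / (b - 1) := by
    have hb₁ : b - 1 ≠ 0 := (sub_pos.2 hb).ne'
    field_simp
    ring
  calc (a n + u / (b - 1)) / b ^ n
      = b * (a n + u / (b - 1)) / b ^ (n + 1) := by
        rw [pow_succ', mul_div_mul_left _ _ hb₀.ne']
    _ ≤ (a (n + 1) + u / (b - 1)) / b ^ (n + 1) := by
        rw [hfix]
        gcongr
        exact ha n hn

theorem add_div_sub_one_div_pow_le_of_tendsto [Archimedean K] [TopologicalSpace K]
    [OrderTopology K] (hb : 1 < b)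
    (ha : ∀ n, m ≤ n → b * a n + u ≤ a (n + 1))
    (hx : Tendsto (fun n => a n / b ^ n) atTop (nhds x)) :
    (a m + u / (b - 1)) / b ^ m ≤ x := by
  have hlim : Tendsto (fun n => (a n + u / (b - 1)) / b ^ n) atTop (nhds x) := by
    simpa only [add_div, add_zero] using
      hx.add ((tendsto_pow_atTop_atTop_of_one_lt hb).const_div_atTop (u / (b - 1)))
  refine ge_of_tendsto hlim ?_
  filter_upwards [eventually_ge_atTop m] with n hn
  exact monotoneOn_add_div_sub_one_div_pow hb ha Set.self_mem_Ici hn hn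

end LinearRecursion

/-- The recursion for spanning forests of the Sierpinski gaskets `SG_2(n)`, with arbitrary initial
values. In the counting case `t` counts the forests joining all three corners, `g` those joining two
prescribed corners but not the third, `h` those separating all three, and `f` counts all forests. -/
structure IsForestRecursion {R : Type*} [CommSemiring R] (t g h f : ℕ → R) : Prop where
  t_succ : ∀ n, t (n + 1) = 6 * t n ^ 2 * g n + 3 * t n * g n ^ 2
  g_succ : ∀ n, g (n + 1) = t n ^ 2 * h n + 2 * t n * g n * h n + 7 * t n * g n ^ 2
    + 4 * g n ^ 3 + g n ^ 2 * h n
  h_succ : ∀ n, h (n + 1) = 12 * t n * g n * h n + 14 * g n ^ 3 + 24 * g n ^ 2 * h n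
    + 9 * g n * h n ^ 2 + 3 * t n * h n ^ 2 + h n ^ 3
  total_eq : ∀ n, f n = t n + 3 * g n + h n

/-- The proportion of forests in which two prescribed corners lie in the same tree: those counted
by `t`, and those counted by `g` for one choice of the joined pair. -/
def linkedRatio {K : Type*} [Field K] (t g f : ℕ → K) (n : ℕ) : K :=
  (t n + g n) / f n

namespace IsForestRecursion

theorem map {R S : Type*} [CommSemiring R] [CommSemiring S] {t g h f : ℕ → R}
    (H : IsForestRecursion t g h f) (φ : R →+* S) :
    IsForestRecursion (φ ∘ t) (φ ∘ g) (φ ∘ h) (φ ∘ f) where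
  t_succ n := by simp [H.t_succ, map_ofNat φ]
  g_succ n := by simp [H.g_succ, map_ofNat φ]
  h_succ n := by simp [H.h_succ, map_ofNat φ]
  total_eq n := by simp [H.total_eq, map_ofNat φ]

section CommRing

variable {R : Type*} [CommRing R] {t g h f : ℕ → R}

theorem total_succ (H : IsForestRecursion t g h f) (n : ℕ) :
    f (n + 1) = f n ^ 3 - (t n + g n) ^ 3 := by
  rw [H.total_eq, H.total_eq, H.t_succ, H.g_succ, H.h_succ]
  ring

theorem linked_mul_total_succ (H : IsForestRecursion t g h f) (n : ℕ) :
    (t n + g n) * f (n + 1) = (t (n + 1) + g (n + 1)) * f n +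
      (t n + g n) * (2 * t n ^ 2 * h n + t n * (2 * g n ^ 2 + 8 * g n * h n + 2 * h n ^ 2) +
        (14 * g n ^ 3 + 20 * g n ^ 2 * h n + 8 * g n * h n ^ 2 + h n ^ 3)) := by
  rw [H.total_eq, H.total_eq, H.t_succ, H.g_succ, H.h_succ]
  ring

end CommRing

section Ordered

variable {K : Type*} [Field K] [LinearOrder K] [IsStrictOrderedRing K] {t g h f : ℕ → K}

theorem nonneg_and_pos (H : IsForestRecursion t g h f) (ht₀ : 0 ≤ t 0) (hg₀ : 0 ≤ g 0)
    (hh₀ : 0 < h 0) (n : ℕ) : 0 ≤ t n ∧ 0 ≤ g n ∧ 0 < h n := by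
  induction n with
  | zero => exact ⟨ht₀, hg₀, hh₀⟩
  | succ n ih =>
    obtain ⟨ht, hg, hh⟩ := ih
    rw [H.t_succ, H.g_succ, H.h_succ]
    refine ⟨?_, ?_, ?_⟩ <;> positivity

theorem total_pos (H : IsForestRecursion t g h f) (ht₀ : 0 ≤ t 0) (hg₀ : 0 ≤ g 0)
    (hh₀ : 0 < h 0) (n : ℕ) : 0 < f n := by
  obtain ⟨ht, hg, hh⟩ := H.nonneg_and_pos ht₀ hg₀ hh₀ n
  rw [H.total_eq]
  positivity

theorem linkedRatio_nonneg (H : IsForestRecursion t g h f) (ht₀ : 0 ≤ t 0) (hg₀ : 0 ≤ g 0)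
    (hh₀ : 0 < h 0) (n : ℕ) : 0 ≤ linkedRatio t g f n := by
  obtain ⟨ht, hg, -⟩ := H.nonneg_and_pos ht₀ hg₀ hh₀ n
  exact div_nonneg (add_nonneg ht hg) (H.total_pos ht₀ hg₀ hh₀ n).le

theorem linkedRatio_lt_one (H : IsForestRecursion t g h f) (ht₀ : 0 ≤ t 0) (hg₀ : 0 ≤ g 0)
    (hh₀ : 0 < h 0) (n : ℕ) : linkedRatio t g f n < 1 := by
  obtain ⟨-, hg, hh⟩ := H.nonneg_and_pos ht₀ hg₀ hh₀ n
  rw [linkedRatio, div_lt_one (H.total_pos ht₀ hg₀ hh₀ n), H.total_eq]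
  linarith

theorem one_sub_linkedRatio_pow_three_pos (H : IsForestRecursion t g h f) (ht₀ : 0 ≤ t 0)
    (hg₀ : 0 ≤ g 0) (hh₀ : 0 < h 0) (n : ℕ) : 0 < 1 - linkedRatio t g f n ^ 3 :=
  sub_pos.2 <| pow_lt_one₀ (H.linkedRatio_nonneg ht₀ hg₀ hh₀ n)
    (H.linkedRatio_lt_one ht₀ hg₀ hh₀ n) three_ne_zero

theorem linkedRatio_antitone (H : IsForestRecursion t g h f) (ht₀ : 0 ≤ t 0) (hg₀ : 0 ≤ g 0)
    (hh₀ : 0 < h 0) : Antitone (linkedRatio t g f) := by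
  refine antitone_nat_of_succ_le fun n => ?_
  obtain ⟨ht, hg, hh⟩ := H.nonneg_and_pos ht₀ hg₀ hh₀ n
  rw [linkedRatio, linkedRatio, div_le_div_iff₀ (H.total_pos ht₀ hg₀ hh₀ _)
    (H.total_pos ht₀ hg₀ hh₀ _), H.linked_mul_total_succ]
  exact le_add_of_nonneg_right (by positivity)

theorem total_succ_eq_mul (H : IsForestRecursion t g h f) (ht₀ : 0 ≤ t 0) (hg₀ : 0 ≤ g 0)
    (hh₀ : 0 < h 0) (n : ℕ) : f (n + 1) = f n ^ 3 * (1 - linkedRatio t g f n ^ 3) := by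
  have hf := (H.total_pos ht₀ hg₀ hh₀ n).ne'
  rw [H.total_succ, linkedRatio]
  field_simp

end Ordered

section Real

variable {t g h f : ℕ → ℝ}

theorem log_total_succ (H : IsForestRecursion t g h f) (ht₀ : 0 ≤ t 0) (hg₀ : 0 ≤ g 0)
    (hh₀ : 0 < h 0) (n : ℕ) :
    Real.log (f (n + 1)) = 3 * Real.log (f n) + Real.log (1 - linkedRatio t g f n ^ 3) := by
  rw [H.total_succ_eq_mul ht₀ hg₀ hh₀,
    Real.log_mul (pow_pos (H.total_pos ht₀ hg₀ hh₀ n) 3).ne'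
      (H.one_sub_linkedRatio_pow_three_pos ht₀ hg₀ hh₀ n).ne', Real.log_pow, Nat.cast_ofNat]

theorem three_mul_log_total_add_le (H : IsForestRecursion t g h f) (ht₀ : 0 ≤ t 0)
    (hg₀ : 0 ≤ g 0) (hh₀ : 0 < h 0) {m n : ℕ} (hmn : m ≤ n) :
    3 * Real.log (f n) + Real.log (1 - linkedRatio t g f m ^ 3) ≤ Real.log (f (n + 1)) := by
  rw [H.log_total_succ ht₀ hg₀ hh₀]
  gcongr
  · exact H.one_sub_linkedRatio_pow_three_pos ht₀ hg₀ hh₀ m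
  · exact H.linkedRatio_nonneg ht₀ hg₀ hh₀ n
  · exact H.linkedRatio_antitone ht₀ hg₀ hh₀ hmn

end Real

end IsForestRecursion

theorem sg2_upper_bound_gap_general {t g h f : ℕ → ℝ} (H : IsForestRecursion t g h f)
    (ht₀ : 0 ≤ t 0) (hg₀ : 0 ≤ g 0) (hh₀ : 0 < h 0) {z : ℝ}
    (hz : Tendsto (fun n => 2 * Real.log (f n) / (3 * (3 ^ n + 1))) atTop (nhds z)) (m : ℕ) :
    2 / 3 ^ (m + 1) * Real.log (f m) - z ≤
      -(1 / 3 ^ (m + 1)) * Real.log (1 - ((t m + g m) / f m) ^ 3) := by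
  have hlim : Tendsto (fun n => Real.log (f n) / 3 ^ n) atTop (nhds (3 / 2 * z)) := by
    refine tendsto_div_of_tendsto_div_add_const (c := 1)
      (tendsto_pow_atTop_atTop_of_one_lt (by norm_num)) ((hz.const_mul (3 / 2)).congr fun n => ?_)
    field_simp
  have hbound : (Real.log (f m) + Real.log (1 - linkedRatio t g f m ^ 3) / (3 - 1)) / 3 ^ m ≤
      3 / 2 * z :=
    add_div_sub_one_div_pow_le_of_tendsto (by norm_num)
      (fun _ => H.three_mul_log_total_add_le ht₀ hg₀ hh₀) hlim
  rw [linkedRatio] at hbound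
  rw [pow_succ]
  linear_combination (2 / 3) * hbound

/-- The difference between the upper bound `(2/3^(m+1)) ln f(m)` and the growth constant `z`
is at most `-(1/3^(m+1)) ln (1 - ((t(m)+g(m))/f(m))^3)`. -/
theorem sg2_upper_bound_gap
    (t g h f : ℕ → ℕ)
    (ht0 : t 0 = 3) (hg0 : g 0 = 1) (hh0 : h 0 = 1)
    (ht : ∀ n, t (n + 1) = 6 * t n ^ 2 * g n + 3 * t n * g n ^ 2)
    (hg : ∀ n, g (n + 1) = t n ^ 2 * h n + 2 * t n * g n * h n + 7 * t n * g n ^ 2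
        + 4 * g n ^ 3 + g n ^ 2 * h n)
    (hh : ∀ n, h (n + 1) = 12 * t n * g n * h n + 14 * g n ^ 3 + 24 * g n ^ 2 * h n
        + 9 * g n * h n ^ 2 + 3 * t n * h n ^ 2 + h n ^ 3)
    (hf : ∀ n, f n = t n + 3 * g n + h n)
    (z : ℝ)
    (hz : Tendsto (fun n : ℕ => 2 * Real.log (f n) / (3 * ((3 : ℝ) ^ n + 1))) atTop (nhds z)) :
    ∀ m : ℕ, 1 ≤ m →
      2 / (3 : ℝ) ^ (m + 1) * Real.log (f m) - z ≤
        -(1 / (3 : ℝ) ^ (m + 1)) *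
          Real.log (1 - (((t m : ℝ) + (g m : ℝ)) / (f m : ℝ)) ^ 3) :=
  fun m _ => sg2_upper_bound_gap_general
    ((IsForestRecursion.mk ht hg hh hf).map (Nat.castRingHom ℝ))
    (Nat.cast_nonneg _) (Nat.cast_nonneg _) (by simp [hh0]) hz m
end

section
/- The asymptotic growth constant z := lim_{n→∞} (5 ln F(n)) / (7·6^n + 8) satisfies 1.31235755933 < z < 1.31235755934. -/
open Filter

/-!
A spanning forest of level `n + 1` is determined by its restrictions to the six copies of level
`n`, so `F (n + 1) ≤ F n ^ 6`. Gluing six forests that separate all their corners creates no cycle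
and leaves the outer corners separated, so `H n ^ 6 ≤ H (n + 1)`. Hence `log (F n) / 6 ^ n`
decreases, `log (H n) / 6 ^ n` increases, and the limit `L` of the former lies between the two.
The gap closes so fast that `F 3` and `H 4` already locate `z = 5 * L / 7` to the stated accuracy.
-/

open Set Topology

section LogBounds

lemma one_add_div_one_sub_sub_one_div_add_one {K : Type*} [Field K] [NeZero (2 : K)] {c : K}
    (hc : c + 1 ≠ 0) :
    (1 + (c - 1) / (c + 1)) / (1 - (c - 1) / (c + 1)) = c := by
  have hden : 1 - (c - 1) / (c + 1) = 2 / (c + 1) := by field_simp; ring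
  rw [hden]
  field_simp
  ring

lemma two_mul_sum_range_le_log {c : ℝ} (hc : 1 ≤ c) (n : ℕ) :
    2 * ∑ i ∈ Finset.range n, ((c - 1) / (c + 1)) ^ (2 * i + 1) / (2 * i + 1) ≤ Real.log c := by
  have hx₀ : 0 ≤ (c - 1) / (c + 1) := div_nonneg (by linarith) (by linarith)
  have hx₁ : (c - 1) / (c + 1) < 1 := (div_lt_one (by linarith)).2 (by linarith)
  have h := Real.sum_range_le_log_div hx₀ hx₁ n
  rw [one_add_div_one_sub_sub_one_div_add_one (by linarith)] at h
  linarith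

lemma log_le_two_mul_sum_range_add {c : ℝ} (hc : 1 ≤ c) (n : ℕ) :
    Real.log c ≤
      2 * (∑ i ∈ Finset.range n, ((c - 1) / (c + 1)) ^ (2 * i + 1) / (2 * i + 1) +
        ((c - 1) / (c + 1)) ^ (2 * n + 1) / (1 - ((c - 1) / (c + 1)) ^ 2)) := by
  have hx₀ : 0 ≤ (c - 1) / (c + 1) := div_nonneg (by linarith) (by linarith)
  have hx₁ : (c - 1) / (c + 1) < 1 := (div_lt_one (by linarith)).2 (by linarith)
  have h := Real.log_div_le_sum_range_add hx₀ hx₁ n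
  rw [one_add_div_one_sub_sub_one_div_add_one (by linarith)] at h
  linarith

lemma log_two_gt_d14 : 0.69314718055994 < Real.log 2 :=
  (two_mul_sum_range_le_log one_le_two 15).trans_lt' (by norm_num [Finset.sum_range_succ])

lemma log_two_lt_d14 : Real.log 2 < 0.69314718055995 :=
  (log_le_two_mul_sum_range_add one_le_two 15).trans_lt (by norm_num [Finset.sum_range_succ])

lemma log_pow_mul {b c : ℝ} (hb : b ≠ 0) (hc : c ≠ 0) (k : ℕ) :
    Real.log (b ^ k * c) = k * Real.log b + Real.log c := by
  rw [Real.log_mul (pow_ne_zero k hb) hc, Real.log_pow]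

end LogBounds

section PowerGrowth

variable {u v : ℕ → ℝ} {k : ℕ}

lemma antitone_log_div_pow (hk : k ≠ 0) (hu : ∀ n, 0 < u n) (hstep : ∀ n, u (n + 1) ≤ u n ^ k) :
    Antitone fun n ↦ Real.log (u n) / (k : ℝ) ^ n := by
  refine antitone_nat_of_succ_le fun n ↦ ?_
  have hlog : Real.log (u (n + 1)) ≤ k * Real.log (u n) :=
    (Real.log_le_log (hu _) (hstep n)).trans_eq (Real.log_pow _ _)
  calc Real.log (u (n + 1)) / (k : ℝ) ^ (n + 1)
      ≤ k * Real.log (u n) / (k : ℝ) ^ (n + 1) := by gcongr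
    _ = Real.log (u n) / (k : ℝ) ^ n := by
        rw [pow_succ', mul_div_mul_left _ _ (Nat.cast_ne_zero.2 hk)]

lemma monotone_log_div_pow (hk : k ≠ 0) (hv : ∀ n, 0 < v n) (hstep : ∀ n, v n ^ k ≤ v (n + 1)) :
    Monotone fun n ↦ Real.log (v n) / (k : ℝ) ^ n := by
  refine monotone_nat_of_le_succ fun n ↦ ?_
  have hlog : k * Real.log (v n) ≤ Real.log (v (n + 1)) :=
    (Real.log_pow _ _).symm.trans_le (Real.log_le_log (pow_pos (hv n) k) (hstep n))
  calc Real.log (v n) / (k : ℝ) ^ n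
      = k * Real.log (v n) / (k : ℝ) ^ (n + 1) := by
        rw [pow_succ', mul_div_mul_left _ _ (Nat.cast_ne_zero.2 hk)]
    _ ≤ Real.log (v (n + 1)) / (k : ℝ) ^ (n + 1) := by gcongr

lemma exists_tendsto_log_div_pow_mem_Icc (hk : k ≠ 0) (hv : ∀ n, 0 < v n) (hvu : ∀ n, v n ≤ u n)
    (hv_step : ∀ n, v n ^ k ≤ v (n + 1)) (hu_step : ∀ n, u (n + 1) ≤ u n ^ k) :
    ∃ L : ℝ, Tendsto (fun n ↦ Real.log (u n) / (k : ℝ) ^ n) atTop (𝓝 L) ∧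
      ∀ n, L ∈ Icc (Real.log (v n) / (k : ℝ) ^ n) (Real.log (u n) / (k : ℝ) ^ n) := by
  have hanti := antitone_log_div_pow hk (fun n ↦ (hv n).trans_le (hvu n)) hu_step
  have hmono := monotone_log_div_pow hk hv hv_step
  have hle : ∀ m n, Real.log (v m) / (k : ℝ) ^ m ≤ Real.log (u n) / (k : ℝ) ^ n :=
    hmono.forall_le_of_antitone hanti fun n ↦ by
      have := Real.log_le_log (hv n) (hvu n)
      dsimp only
      gcongr
  have hbdd : BddBelow (range fun n ↦ Real.log (u n) / (k : ℝ) ^ n) :=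
    ⟨_, forall_mem_range.2 (hle 0)⟩
  exact ⟨_, tendsto_atTop_ciInf hanti hbdd, fun n ↦ ⟨le_ciInf (hle n), ciInf_le hbdd n⟩⟩

lemma tendsto_div_const_mul_pow_add {x : ℕ → ℝ} {L r a : ℝ} (b : ℝ)
    (hx : Tendsto (fun n ↦ x n / r ^ n) atTop (𝓝 L)) (hr : 1 < r) (ha : a ≠ 0) :
    Tendsto (fun n ↦ x n / (a * r ^ n + b)) atTop (𝓝 (L / a)) := by
  have hb : Tendsto (fun n ↦ b / r ^ n) atTop (𝓝 0) :=
    tendsto_const_nhds.div_atTop (tendsto_pow_atTop_atTop_of_one_lt hr)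
  have hden : Tendsto (fun n ↦ a + b / r ^ n) atTop (𝓝 a) := by simpa using hb.const_add a
  refine (hx.div hden ha).congr fun n ↦ ?_
  have hrn : r ^ n ≠ 0 := (pow_pos (zero_lt_one.trans hr) n).ne'
  rw [Pi.div_apply, div_div, mul_add, mul_div_cancel₀ b hrn, mul_comm]

end PowerGrowth

/-- The numbers of spanning forests of a graph with three interchangeable marked corners, classified
by the partition of the corners into components. By symmetry one number `paired` serves all three
pairs of corners; the fields are `T n`, `G n` and `H n` for the `n`-th gasket. -/
structure CornerCounts where
  /-- Forests with all three corners in one component. -/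
  connected : ℕ
  /-- Forests joining one prescribed pair of corners but not the third corner. -/
  paired : ℕ
  /-- Forests with the three corners in different components. -/
  separated : ℕ

namespace CornerCounts

/-- The number of all spanning forests. -/
def total (c : CornerCounts) : ℕ := c.connected + 3 * c.paired + c.separated

/-- The counts for `SG_{2,3}(n + 1)` in terms of the counts `⟨t, g, h⟩` for `SG_{2,3}(n)`, found by
classifying the spanning forests by their restrictions to the six copies of `SG_{2,3}(n)`. -/
def step : CornerCounts → CornerCounts
  | ⟨t, g, h⟩ =>
    { connected :=
        142 * t ^ 3 * g ^ 3 + 18 * t ^ 4 * g * h + 45 * t ^ 3 * g ^ 2 * h + 153 * t ^ 2 * g ^ 4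
          + 36 * t ^ 2 * g ^ 3 * h + 45 * t * g ^ 5 + 9 * t * g ^ 4 * h + 2 * g ^ 6
      paired :=
        77 * t ^ 3 * g ^ 2 * h + 171 * t ^ 2 * g ^ 4 + 2 * t ^ 4 * h ^ 2 + 22 * t ^ 3 * g * h ^ 2
          + 200 * t ^ 2 * g ^ 3 * h + 195 * t * g ^ 5 + t ^ 3 * h ^ 3
          + 50 * t ^ 2 * g ^ 2 * h ^ 2 + 169 * t * g ^ 4 * h + 56 * g ^ 6 + 3 * t ^ 2 * g * h ^ 3
          + 42 * t * g ^ 3 * h ^ 2 + 46 * g ^ 5 * h + 3 * t * g ^ 2 * h ^ 3 + 12 * g ^ 4 * h ^ 2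
          + g ^ 3 * h ^ 3
      separated :=
        60 * t ^ 3 * g * h ^ 2 + 564 * t ^ 2 * g ^ 3 * h + 468 * t * g ^ 5 + 14 * t ^ 3 * h ^ 3
          + 552 * t ^ 2 * g ^ 2 * h ^ 2 + 1608 * t * g ^ 4 * h + 468 * g ^ 6
          + 162 * t ^ 2 * g * h ^ 3 + 1404 * t * g ^ 3 * h ^ 2 + 1236 * g ^ 5 * h
          + 15 * t ^ 2 * h ^ 4 + 522 * t * g ^ 2 * h ^ 3 + 1152 * g ^ 4 * h ^ 2
          + 90 * t * g * h ^ 4 + 534 * g ^ 3 * h ^ 3 + 6 * t * h ^ 5 + 135 * g ^ 2 * h ^ 4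
          + 18 * g * h ^ 5 + h ^ 6 }

lemma total_step_le (c : CornerCounts) : c.step.total ≤ c.total ^ 6 := by
  obtain ⟨t, g, h⟩ := c
  simp only [step, total]
  zify
  rw [← sub_nonneg]
  -- All the coefficients of the difference are nonnegative.
  ring_nf
  positivity

lemma separated_pow_le_separated_step (c : CornerCounts) :
    c.separated ^ 6 ≤ c.step.separated :=
  Nat.le_add_left _ _

lemma separated_le_total (c : CornerCounts) : c.separated ≤ c.total :=
  Nat.le_add_left _ _

end CornerCounts

/-- The corner counts of `SG_{2,3}(n)`, starting from the triangle `SG_{2,3}(0)`. -/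
def sg23Counts : ℕ → CornerCounts
  | 0 => ⟨3, 1, 1⟩
  | n + 1 => (sg23Counts n).step

namespace sg23Counts

lemma separated_pos (n : ℕ) : 0 < (sg23Counts n).separated := by
  induction n with
  | zero => exact one_pos
  | succ n ih => exact (pow_pos ih 6).trans_le (sg23Counts n).separated_pow_le_separated_step

lemma exists_tendsto_log_total_div_pow :
    ∃ L : ℝ, Tendsto (fun n ↦ Real.log (sg23Counts n).total / (6 : ℝ) ^ n) atTop (𝓝 L) ∧
      ∀ n, L ∈ Icc (Real.log (sg23Counts n).separated / (6 : ℝ) ^ n)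
        (Real.log (sg23Counts n).total / (6 : ℝ) ^ n) :=
  exists_tendsto_log_div_pow_mem_Icc (k := 6) (by norm_num)
    (fun n ↦ mod_cast separated_pos n)
    (fun n ↦ mod_cast (sg23Counts n).separated_le_total)
    (fun n ↦ mod_cast (sg23Counts n).separated_pow_le_separated_step)
    (fun n ↦ mod_cast (sg23Counts n).total_step_le)

set_option exponentiation.threshold 600 in
lemma total_three_le : ((sg23Counts 3).total : ℝ) ≤ 2 ^ 572 * 1.457523353 := by
  norm_num [sg23Counts, CornerCounts.step, CornerCounts.total]

set_option exponentiation.threshold 4000 in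
lemma le_separated_four : 2 ^ 3435 * 1.1984037053 ≤ ((sg23Counts 4).separated : ℝ) := by
  norm_num [sg23Counts, CornerCounts.step]

lemma log_total_three_lt : Real.log (sg23Counts 3).total < 396.856925944 := by
  have hpos : (0 : ℝ) < (sg23Counts 3).total :=
    mod_cast (separated_pos 3).trans_le (sg23Counts 3).separated_le_total
  have hmantissa : Real.log 1.457523353 < 0.376738663 :=
    (log_le_two_mul_sum_range_add (by norm_num) 7).trans_lt (by norm_num [Finset.sum_range_succ])
  calc Real.log (sg23Counts 3).total
      ≤ Real.log (2 ^ 572 * 1.457523353) := Real.log_le_log hpos total_three_le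
    _ = (572 : ℕ) * Real.log 2 + Real.log 1.457523353 := log_pow_mul two_ne_zero (by norm_num) 572
    _ < 396.856925944 := by push_cast; linarith [log_two_lt_d14]

lemma lt_log_separated_four : 2381.1415556485 < Real.log (sg23Counts 4).separated := by
  have hmantissa : 0.1809904253 < Real.log 1.1984037053 :=
    (two_mul_sum_range_le_log (by norm_num) 6).trans_lt' (by norm_num [Finset.sum_range_succ])
  calc (2381.1415556485 : ℝ)
      < (3435 : ℕ) * Real.log 2 + Real.log 1.1984037053 := by
        push_cast; linarith [log_two_gt_d14]
    _ = Real.log (2 ^ 3435 * 1.1984037053) := (log_pow_mul two_ne_zero (by norm_num) 3435).symm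
    _ ≤ Real.log (sg23Counts 4).separated := Real.log_le_log (by positivity) le_separated_four

end sg23Counts

/-- The asymptotic growth constant `z_{SG_{2,3}} = lim 5 ln F(n) / (7·6^n + 8)` satisfies
`1.31235755933 < z < 1.31235755934`. -/
theorem sg23_growth_constant_value
    (T G H F : ℕ → ℕ)
    (hT0 : T 0 = 3) (hG0 : G 0 = 1) (hH0 : H 0 = 1)
    (hT : ∀ n, T (n + 1) =
        142 * T n ^ 3 * G n ^ 3 + 18 * T n ^ 4 * G n * H n + 45 * T n ^ 3 * G n ^ 2 * H n
        + 153 * T n ^ 2 * G n ^ 4 + 36 * T n ^ 2 * G n ^ 3 * H n + 45 * T n * G n ^ 5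
        + 9 * T n * G n ^ 4 * H n + 2 * G n ^ 6)
    (hG : ∀ n, G (n + 1) =
        77 * T n ^ 3 * G n ^ 2 * H n + 171 * T n ^ 2 * G n ^ 4 + 2 * T n ^ 4 * H n ^ 2
        + 22 * T n ^ 3 * G n * H n ^ 2 + 200 * T n ^ 2 * G n ^ 3 * H n + 195 * T n * G n ^ 5
        + T n ^ 3 * H n ^ 3 + 50 * T n ^ 2 * G n ^ 2 * H n ^ 2 + 169 * T n * G n ^ 4 * H n
        + 56 * G n ^ 6 + 3 * T n ^ 2 * G n * H n ^ 3 + 42 * T n * G n ^ 3 * H n ^ 2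
        + 46 * G n ^ 5 * H n + 3 * T n * G n ^ 2 * H n ^ 3 + 12 * G n ^ 4 * H n ^ 2
        + G n ^ 3 * H n ^ 3)
    (hH : ∀ n, H (n + 1) =
        60 * T n ^ 3 * G n * H n ^ 2 + 564 * T n ^ 2 * G n ^ 3 * H n + 468 * T n * G n ^ 5
        + 14 * T n ^ 3 * H n ^ 3 + 552 * T n ^ 2 * G n ^ 2 * H n ^ 2
        + 1608 * T n * G n ^ 4 * H n + 468 * G n ^ 6 + 162 * T n ^ 2 * G n * H n ^ 3
        + 1404 * T n * G n ^ 3 * H n ^ 2 + 1236 * G n ^ 5 * H n + 15 * T n ^ 2 * H n ^ 4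
        + 522 * T n * G n ^ 2 * H n ^ 3 + 1152 * G n ^ 4 * H n ^ 2 + 90 * T n * G n * H n ^ 4
        + 534 * G n ^ 3 * H n ^ 3 + 6 * T n * H n ^ 5 + 135 * G n ^ 2 * H n ^ 4
        + 18 * G n * H n ^ 5 + H n ^ 6)
    (hF : ∀ n, F n = T n + 3 * G n + H n) :
    ∃ z : ℝ,
      Tendsto (fun n : ℕ => 5 * Real.log (F n) / (7 * (6 : ℝ) ^ n + 8)) atTop (nhds z) ∧
      1.31235755933 < z ∧ z < 1.31235755934 := by
  have hcounts (n : ℕ) : sg23Counts n = ⟨T n, G n, H n⟩ := by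
    induction n with
    | zero => rw [hT0, hG0, hH0, sg23Counts]
    | succ n ih => rw [hT, hG, hH, sg23Counts, ih, CornerCounts.step]
  have htotal (n : ℕ) : F n = (sg23Counts n).total := by rw [hF, hcounts, CornerCounts.total]
  obtain ⟨L, hlim, hmem⟩ := sg23Counts.exists_tendsto_log_total_div_pow
  refine ⟨5 * L / 7, ?_, ?_, ?_⟩
  · simp only [htotal]
    refine tendsto_div_const_mul_pow_add 8 ?_ (by norm_num) (by norm_num)
    simpa only [mul_div_assoc] using hlim.const_mul 5
  · have hlower : 2381.1415556485 / 6 ^ 4 < L :=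
      (div_lt_div_of_pos_right sg23Counts.lt_log_separated_four (by norm_num)).trans_le (hmem 4).1
    norm_num at hlower ⊢
    linarith
  · have hupper : L < 396.856925944 / 6 ^ 3 :=
      (hmem 3).2.trans_lt (div_lt_div_of_pos_right sg23Counts.log_total_three_lt (by norm_num))
    norm_num at hupper ⊢
    linarith
end

section
/- The asymptotic growth constant z := lim_{n→∞} ln f(n) / (2 (4^n + 1)) satisfies 1.66680628117 < z < 1.66680628118. -/
open Filter

/-!
Gluing four copies of `SG_3(n)` along their corners gives `SG_3(n+1)`, so `f(n+1)` counts those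
quadruples of spanning forests of `SG_3(n)` whose union has no cycle, and
`f(n)^4 - f(n+1) ≥ 0` counts the rest. Closing a cycle requires connections between corners inside
several copies, and connected corners are rare: once `q` dominates `p`, and `p` dominates `t`, `g`
and `h`, the recursion preserves this (the ratio `p / q` is roughly squared at each step), and the
rejected quadruples are a fraction of at most about `4 (p / q)^3`. Hence `4 ln f(n)` and
`ln f(n+1)` differ by less than `10⁻⁸` for `n ≥ 5`, which makes `ln f(n) / 4^n` a Cauchy sequence
with limit within `10⁻⁸ / (3 * 4^5)` of `ln f(5) / 4^5`; the exact value of `f(5)` does the rest.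
-/

open scoped Topology

/-- Hyers–Ulam stability of the recursion `x (n + 1) = d • x n`. -/
theorem exists_tendsto_inv_pow_smul {𝕜 E : Type*} [NormedField 𝕜] [SeminormedAddCommGroup E]
    [NormedSpace 𝕜 E] [CompleteSpace E] {d : 𝕜} (hd : 1 < ‖d‖) {x : ℕ → E} {c : ℝ}
    (hx : ∀ n, ‖x (n + 1) - d • x n‖ ≤ c) :
    ∃ L, Tendsto (fun n ↦ (d ^ n)⁻¹ • x n) atTop (𝓝 L) ∧ ‖x 0 - L‖ ≤ c / (‖d‖ - 1) := by
  have hd_pos : 0 < ‖d‖ := one_pos.trans hd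
  have hd_ne : d ≠ 0 := norm_pos_iff.mp hd_pos
  have dist_le (n : ℕ) :
      dist ((d ^ n)⁻¹ • x n) ((d ^ (n + 1))⁻¹ • x (n + 1)) ≤ c / ‖d‖ * ‖d‖⁻¹ ^ n := by
    have factor : (d ^ (n + 1))⁻¹ • x (n + 1) - (d ^ n)⁻¹ • x n
        = (d ^ (n + 1))⁻¹ • (x (n + 1) - d • x n) := by
      rw [smul_sub, smul_smul, pow_succ, mul_inv, inv_mul_cancel_right₀ hd_ne]
    calc dist ((d ^ n)⁻¹ • x n) ((d ^ (n + 1))⁻¹ • x (n + 1))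
        = ‖d‖⁻¹ ^ (n + 1) * ‖x (n + 1) - d • x n‖ := by
          rw [dist_comm, dist_eq_norm, factor, norm_smul, norm_inv, norm_pow, inv_pow]
      _ ≤ ‖d‖⁻¹ ^ (n + 1) * c := by gcongr; exact hx n
      _ = c / ‖d‖ * ‖d‖⁻¹ ^ n := by ring
  have ratio_lt_one : ‖d‖⁻¹ < 1 := inv_lt_one_of_one_lt₀ hd
  obtain ⟨L, hL⟩ := cauchySeq_tendsto_of_complete
    (cauchySeq_of_le_geometric _ _ ratio_lt_one dist_le)
  refine ⟨L, hL, ?_⟩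
  have := dist_le_of_le_geometric_of_tendsto₀ _ _ ratio_lt_one dist_le hL
  rwa [pow_zero, inv_one, one_smul, dist_eq_norm, div_div, mul_sub, mul_one,
    mul_inv_cancel₀ hd_pos.ne'] at this

theorem tendsto_div_mul_pow_add_one {u : ℕ → ℝ} {b c L : ℝ} (hb : 1 < b) (hc : c ≠ 0) (k : ℕ)
    (hu : Tendsto (fun n ↦ u (n + k) / b ^ n) atTop (𝓝 L)) :
    Tendsto (fun n ↦ u n / (c * (b ^ n + 1))) atTop (𝓝 (L / (c * b ^ k))) := by
  have hb_pos : 0 < b := one_pos.trans hb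
  have pow_tendsto : Tendsto (fun n : ℕ ↦ b⁻¹ ^ n) atTop (𝓝 0) :=
    tendsto_pow_atTop_nhds_zero_of_lt_one (inv_nonneg.mpr hb_pos.le) (inv_lt_one_of_one_lt₀ hb)
  rw [← tendsto_add_atTop_iff_nat k]
  have quotient_tendsto := hu.div ((pow_tendsto.const_add (b ^ k)).const_mul c)
    (by rw [add_zero]; positivity)
  rw [add_zero] at quotient_tendsto
  refine quotient_tendsto.congr fun n ↦ ?_
  simp only [Pi.div_apply, div_div, pow_add, inv_pow]
  field_simp

section Exponential

open Real Finset

variable {a x : ℝ} (k m : ℕ)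

theorem pow_mul_sum_le_exp_natCast_add (ha : 0 ≤ a) (hae : a ≤ exp 1) (hx : 0 ≤ x) :
    a ^ k * ∑ i ∈ range m, x ^ i / i.factorial ≤ exp (k + x) := by
  rw [exp_add, ← exp_one_pow]
  gcongr
  exact sum_le_exp_of_nonneg hx m

theorem exp_natCast_add_le_pow_mul (hae : exp 1 ≤ a) (hx : 0 ≤ x) (hx1 : x ≤ 1) (hm : 0 < m) :
    exp (k + x) ≤ a ^ k *
      (∑ i ∈ range m, x ^ i / i.factorial + x ^ m * (m + 1) / (m.factorial * m)) := by
  have ha : 0 ≤ a := (exp_pos 1).le.trans hae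
  rw [exp_add, ← exp_one_pow]
  gcongr
  exact exp_bound' hx hx1 hm

theorem exp_one_gt_d14 : 2.71828182845904 < exp 1 := by
  linarith [(abs_sub_le_iff.mp exp_one_near_20).2]

theorem exp_one_lt_d14 : exp 1 < 2.71828182845905 := by
  linarith [(abs_sub_le_iff.mp exp_one_near_20).1]

end Exponential

/-- The numbers of spanning forests of a graph with four symmetric corner vertices, according to
how the corners are distributed over the trees: `t` with all corners in one tree, `g` with a given
corner in one tree and the other three in another, `h` with the corners in two trees in two given
pairs, `p` with a given pair in one tree and the other two corners each in a tree of its own,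
`q` with all corners in different trees. -/
@[ext]
structure ForestCounts where
  t : ℕ
  g : ℕ
  h : ℕ
  p : ℕ
  q : ℕ

namespace ForestCounts

/-- The number of all spanning forests: the weights `1, 4, 3, 6, 1` are the numbers of partitions
of the four corners of each shape. -/
def total : ForestCounts → ℕ
  | ⟨t, g, h, p, q⟩ => t + 4 * g + 3 * h + 6 * p + q

/-- The counts for the graph obtained by gluing four copies of a graph at their corners, as
`SG_3(n + 1)` is obtained from `SG_3(n)`. -/
def glue : ForestCounts → ForestCounts
  | ⟨t, g, h, p, q⟩ =>
    { t := 72 * t ^ 2 * p * (g + h) + 56 * t * (g + h) ^ 3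
        + 24 * t ^ 2 * p ^ 2
        + 12 * t * p * (11 * g ^ 2 + 12 * g * h + h ^ 2)
        + 12 * g ^ 2 * (3 * g ^ 2 + 8 * g * h + 6 * h ^ 2)
        + 12 * t * p ^ 2 * (4 * g + h) + 48 * g ^ 2 * p * (g + h)
        + 4 * t * p ^ 3 + 12 * g ^ 2 * p ^ 2
      g := 6 * t ^ 2 * q * (g + h) + 24 * t ^ 2 * p ^ 2
        + 12 * t * p * (9 * g ^ 2 + 16 * g * h + 7 * h ^ 2)
        + 4 * g * (5 * g ^ 3 + 18 * g ^ 2 * h + 24 * g * h ^ 2 + 14 * h ^ 3)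
        + 6 * t ^ 2 * p * q + 6 * t * p ^ 2 * (21 * g + 11 * h)
        + 3 * t * q * (5 * g ^ 2 + 6 * g * h + h ^ 2)
        + 24 * g * p * (5 * g ^ 2 + 9 * g * h + 4 * h ^ 2)
        + 6 * t * p * q * (3 * g + h) + 21 * t * p ^ 3
        + 6 * g * p ^ 2 * (19 * g + 13 * h)
        + 3 * g * q * (3 * g ^ 2 + 4 * g * h + h ^ 2)
        + 3 * t * p ^ 2 * q + 6 * g * p * q * (2 * g + h)
        + 25 * g * p ^ 3 + 3 * g * p ^ 2 * q
      h := 2 * t ^ 2 * p ^ 2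
        + 12 * t * p * (g ^ 2 + 4 * g * h + 3 * h ^ 2)
        + 2 * (g ^ 4 + 8 * g ^ 3 * h + 18 * g ^ 2 * h ^ 2
            + 16 * g * h ^ 3 + 11 * h ^ 4)
        + 8 * t * p ^ 2 * (2 * g + 3 * h)
        + 8 * p * (2 * g ^ 3 + 9 * g ^ 2 * h + 9 * g * h ^ 2 + 2 * h ^ 3)
        + 4 * t * p ^ 3
        + 2 * p ^ 2 * (10 * g ^ 2 + 24 * g * h + 9 * h ^ 2)
        + 8 * p ^ 3 * (g + h) + p ^ 4
      p := 6 * t ^ 2 * p * q + 120 * t * p ^ 2 * (g + h)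
        + 14 * t * q * (g + h) ^ 2 + 88 * p * (g + h) ^ 3
        + 4 * t * p * q * (13 * g + 10 * h) + 78 * t * p ^ 3
        + 6 * p ^ 2 * (49 * g ^ 2 + 78 * g * h + 29 * h ^ 2)
        + 2 * q * (11 * g ^ 3 + 26 * g ^ 2 * h + 19 * g * h ^ 2 + 4 * h ^ 3)
        + t ^ 2 * q ^ 2 + 2 * t * q ^ 2 * (2 * g + h)
        + 26 * t * p ^ 2 * q
        + 2 * p * q * (38 * g ^ 2 + 50 * g * h + 15 * h ^ 2)
        + 2 * p ^ 3 * (115 * g + 76 * h) + 2 * t * p * q ^ 2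
        + q ^ 2 * (4 * g ^ 2 + 4 * g * h + h ^ 2)
        + 2 * p ^ 2 * q * (31 * g + 18 * h) + 49 * p ^ 4
        + 2 * p * q ^ 2 * (2 * g + h) + 14 * p ^ 3 * q + p ^ 2 * q ^ 2
      q := 144 * t * p * q * (g + h) + 208 * t * p ^ 3
        + 720 * p ^ 2 * (g + h) ^ 2 + 56 * q * (g + h) ^ 3
        + 24 * t * q ^ 2 * (g + h) + 252 * t * p ^ 2 * q
        + 24 * p * q * (25 * g ^ 2 + 44 * g * h + 19 * h ^ 2)
        + 104 * p ^ 3 * (17 * g + 15 * h) + 60 * t * p * q ^ 2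
        + 24 * q ^ 2 * (3 * g ^ 2 + 5 * g * h + 2 * h ^ 2)
        + 12 * p ^ 2 * q * (110 * g + 89 * h) + 972 * p ^ 4
        + 4 * t * q ^ 3 + 12 * p * q ^ 2 * (22 * g + 17 * h)
        + 776 * p ^ 3 * q + 4 * q ^ 3 * (4 * g + 3 * h)
        + 210 * p ^ 2 * q ^ 2 + 24 * p * q ^ 3 + q ^ 4 }

/-- The number of quadruples of spanning forests, one in each of four copies, whose union after
gluing contains a cycle; the coefficients are those of `total ^ 4 - glue.total`. -/
def cyclicGluings : ForestCounts → ℕ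
  | ⟨t, g, h, p, q⟩ =>
    t ^ 4 + 16 * t ^ 3 * g + 12 * t ^ 3 * h + 24 * t ^ 3 * p + 4 * t ^ 3 * q
    + 96 * t ^ 2 * g ^ 2 + 144 * t ^ 2 * g * h + 216 * t ^ 2 * g * p + 24 * t ^ 2 * g * q
    + 54 * t ^ 2 * h ^ 2 + 144 * t ^ 2 * h * p + 12 * t ^ 2 * h * q + 90 * t ^ 2 * p ^ 2
    + 12 * t ^ 2 * p * q + 200 * t * g ^ 3 + 408 * t * g ^ 2 * h + 552 * t * g ^ 2 * p
    + 48 * t * g ^ 2 * q + 264 * t * g * h ^ 2 + 672 * t * g * h * p + 48 * t * g * h * q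
    + 408 * t * g * p ^ 2 + 48 * t * g * p * q + 52 * t * h ^ 3 + 192 * t * h ^ 2 * p
    + 12 * t * h ^ 2 * q + 228 * t * h * p ^ 2 + 24 * t * h * p * q + 88 * t * p ^ 3
    + 12 * t * p ^ 2 * q + 134 * g ^ 4 + 336 * g ^ 3 * h + 432 * g ^ 3 * p + 32 * g ^ 3 * q
    + 300 * g ^ 2 * h ^ 2 + 744 * g ^ 2 * h * p + 48 * g ^ 2 * h * q + 444 * g ^ 2 * p ^ 2
    + 48 * g ^ 2 * p * q + 112 * g * h ^ 3 + 408 * g * h ^ 2 * p + 24 * g * h ^ 2 * q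
    + 480 * g * h * p ^ 2 + 48 * g * h * p * q + 184 * g * p ^ 3 + 24 * g * p ^ 2 * q
    + 15 * h ^ 4 + 72 * h ^ 3 * p + 4 * h ^ 3 * q + 126 * h ^ 2 * p ^ 2 + 12 * h ^ 2 * p * q
    + 96 * h * p ^ 3 + 12 * h * p ^ 2 * q + 27 * p ^ 4 + 4 * p ^ 3 * q

theorem total_pow_four : ∀ s : ForestCounts, s.total ^ 4 = s.glue.total + s.cyclicGluings
  | ⟨t, g, h, p, q⟩ => by simp only [total, glue, cyclicGluings]; ring

theorem total_glue_le (s : ForestCounts) : s.glue.total ≤ s.total ^ 4 :=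
  s.total_pow_four ▸ Nat.le_add_right _ _

theorem p_sq_mul_q_sq_le_p_glue (s : ForestCounts) : s.p ^ 2 * s.q ^ 2 ≤ s.glue.p :=
  Nat.le_add_left _ _

theorem q_pow_four_le_q_glue (s : ForestCounts) : s.q ^ 4 ≤ s.glue.q :=
  Nat.le_add_left _ _

theorem q_le_total (s : ForestCounts) : s.q ≤ s.total :=
  Nat.le_add_left _ _

/-- Coordinatewise comparison. -/
instance : PartialOrder ForestCounts :=
  PartialOrder.lift (fun s ↦ (s.t, s.g, s.h, s.p, s.q)) fun s s' hss' ↦ by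
    simpa only [Prod.mk.injEq, ForestCounts.ext_iff] using hss'

/-- Coordinatewise multiplication. -/
instance : SMul ℕ ForestCounts where
  smul c s := ⟨c * s.t, c * s.g, c * s.h, c * s.p, c * s.q⟩

theorem glue_smul (c : ℕ) : ∀ s : ForestCounts, (c • s).glue = c ^ 4 • s.glue
  | ⟨t, g, h, p, q⟩ => by
    change glue ⟨c * t, c * g, c * h, c * p, c * q⟩ = ⟨_, _, _, _, _⟩
    simp only [glue, mk.injEq]
    refine ⟨?_, ?_, ?_, ?_, ?_⟩ <;> ring

theorem cyclicGluings_smul (c : ℕ) :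
    ∀ s : ForestCounts, (c • s).cyclicGluings = c ^ 4 * s.cyclicGluings
  | ⟨t, g, h, p, q⟩ => by
    change cyclicGluings ⟨c * t, c * g, c * h, c * p, c * q⟩ = _
    simp only [cyclicGluings]
    ring

theorem glue_mono : Monotone glue := by
  rintro ⟨t, g, h, p, q⟩ ⟨t', g', h', p', q'⟩ ⟨ht, hg, hh, hp, hq⟩
  dsimp only at ht hg hh hp hq
  refine ⟨?_, ?_, ?_, ?_, ?_⟩ <;> simp only [glue] <;> gcongr

theorem cyclicGluings_mono : Monotone cyclicGluings := by
  rintro ⟨t, g, h, p, q⟩ ⟨t', g', h', p', q'⟩ ⟨ht, hg, hh, hp, hq⟩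
  dsimp only at ht hg hh hp hq
  simp only [cyclicGluings]
  gcongr

/-- The region, invariant under gluing, in which most forests separate all four corners, and most
of the others connect only two of them. With these constants it is first entered at `SG_3(5)`. -/
structure RarelyConnected (s : ForestCounts) : Prop where
  t_le : 100 * s.t ≤ s.p
  g_le : 100 * s.g ≤ s.p
  h_le : 100 * s.h ≤ s.p
  p_le : 1000 * s.p ≤ s.q
  q_pos : 0 < s.q

namespace RarelyConnected

variable {s : ForestCounts}

theorem pow_mul_monomial_le (hs : s.RarelyConnected) (i j k : ℕ) :
    1000 ^ k * (s.p ^ (i + k) * s.q ^ j) ≤ s.p ^ i * s.q ^ (j + k) :=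
  calc 1000 ^ k * (s.p ^ (i + k) * s.q ^ j) = s.p ^ i * s.q ^ j * (1000 * s.p) ^ k := by ring
    _ ≤ s.p ^ i * s.q ^ j * s.q ^ k := by gcongr; exact hs.p_le
    _ = s.p ^ i * s.q ^ (j + k) := by ring

theorem hundred_smul_le (hs : s.RarelyConnected) :
    100 • s ≤ ⟨s.p, s.p, s.p, 100 * s.p, 100 * s.q⟩ :=
  ⟨hs.t_le, hs.g_le, hs.h_le, le_rfl, le_rfl⟩

theorem hundred_pow_smul_glue_le (hs : s.RarelyConnected) :
    100 ^ 4 • s.glue ≤ glue ⟨s.p, s.p, s.p, 100 * s.p, 100 * s.q⟩ :=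
  glue_smul 100 s ▸ glue_mono hs.hundred_smul_le

theorem total_pos (hs : s.RarelyConnected) : 0 < s.total :=
  hs.q_pos.trans_le s.q_le_total

theorem t_glue_le (hs : s.RarelyConnected) : s.glue.t ≤ s.p ^ 4 := by
  refine Nat.le_of_mul_le_mul_left (hs.hundred_pow_smul_glue_le.1.trans ?_)
    (by norm_num : 0 < 100 ^ 4)
  simp only [ForestCounts.glue]
  linarith [Nat.zero_le (s.p ^ 4)]

theorem g_glue_le (hs : s.RarelyConnected) : s.glue.g ≤ s.p ^ 3 * s.q + s.p ^ 4 := by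
  refine Nat.le_of_mul_le_mul_left (hs.hundred_pow_smul_glue_le.2.1.trans ?_)
    (by norm_num : 0 < 100 ^ 4)
  simp only [ForestCounts.glue]
  linarith [Nat.zero_le (s.p ^ 4), Nat.zero_le (s.p ^ 3 * s.q)]

theorem h_glue_le (hs : s.RarelyConnected) : s.glue.h ≤ 2 * s.p ^ 4 := by
  refine Nat.le_of_mul_le_mul_left (hs.hundred_pow_smul_glue_le.2.2.1.trans ?_)
    (by norm_num : 0 < 100 ^ 4)
  simp only [ForestCounts.glue]
  linarith [Nat.zero_le (s.p ^ 4)]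

theorem p_glue_le (hs : s.RarelyConnected) :
    s.glue.p ≤ 2 * s.p ^ 2 * s.q ^ 2 + 16 * s.p ^ 3 * s.q + 54 * s.p ^ 4 := by
  refine Nat.le_of_mul_le_mul_left (hs.hundred_pow_smul_glue_le.2.2.2.1.trans ?_)
    (by norm_num : 0 < 100 ^ 4)
  simp only [ForestCounts.glue]
  linarith [Nat.zero_le (s.p ^ 4), Nat.zero_le (s.p ^ 3 * s.q), Nat.zero_le (s.p ^ 2 * s.q ^ 2)]

protected theorem glue (hs : s.RarelyConnected) : s.glue.RarelyConnected := by
  have p_glue_ge := s.p_sq_mul_q_sq_le_p_glue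
  have q_glue_ge := s.q_pow_four_le_q_glue
  have p_pow_four_le : 1000 ^ 2 * s.p ^ 4 ≤ s.p ^ 2 * s.q ^ 2 := by
    simpa using hs.pow_mul_monomial_le 2 0 2
  have p_cube_mul_q_le : 1000 * (s.p ^ 3 * s.q) ≤ s.p ^ 2 * s.q ^ 2 := by
    simpa using hs.pow_mul_monomial_le 2 1 1
  have p_sq_mul_q_sq_le : 1000 ^ 2 * (s.p ^ 2 * s.q ^ 2) ≤ s.q ^ 4 := by
    simpa using hs.pow_mul_monomial_le 0 2 2
  exact
    { t_le := by linarith [hs.t_glue_le, Nat.zero_le (s.p ^ 4)]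
      g_le := by linarith [hs.g_glue_le, Nat.zero_le (s.p ^ 4), Nat.zero_le (s.p ^ 3 * s.q)]
      h_le := by linarith [hs.h_glue_le, Nat.zero_le (s.p ^ 4)]
      p_le := by
        linarith [hs.p_glue_le, Nat.zero_le (s.p ^ 4), Nat.zero_le (s.p ^ 3 * s.q),
          Nat.zero_le (s.p ^ 2 * s.q ^ 2)]
      q_pos := (pow_pos hs.q_pos 4).trans_le q_glue_ge }

theorem cyclicGluings_le (hs : s.RarelyConnected) :
    s.cyclicGluings ≤ 5 * s.p ^ 3 * s.q + 31 * s.p ^ 4 := by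
  have majorant := cyclicGluings_mono hs.hundred_smul_le
  rw [cyclicGluings_smul] at majorant
  refine Nat.le_of_mul_le_mul_left (majorant.trans ?_) (by norm_num : 0 < 100 ^ 4)
  simp only [cyclicGluings]
  linarith [Nat.zero_le (s.p ^ 4), Nat.zero_le (s.p ^ 3 * s.q)]

theorem cyclicGluings_le_q_pow_four (hs : s.RarelyConnected) :
    10 ^ 8 * s.cyclicGluings ≤ s.q ^ 4 := by
  have p_pow_four_le : 1000 ^ 4 * s.p ^ 4 ≤ s.q ^ 4 := by
    simpa using hs.pow_mul_monomial_le 0 0 4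
  have p_cube_mul_q_le : 1000 ^ 3 * (s.p ^ 3 * s.q) ≤ s.q ^ 4 := by
    simpa using hs.pow_mul_monomial_le 0 1 3
  linarith [hs.cyclicGluings_le, Nat.zero_le (s.p ^ 4), Nat.zero_le (s.p ^ 3 * s.q)]

theorem total_pow_four_le (hs : s.RarelyConnected) :
    (s.total : ℝ) ^ 4 ≤ (1 + 1 / 10 ^ 8) * s.glue.total := by
  have cyclic_le : 10 ^ 8 * (s.cyclicGluings : ℝ) ≤ s.glue.total := by
    exact_mod_cast hs.cyclicGluings_le_q_pow_four.trans
      (s.q_pow_four_le_q_glue.trans s.glue.q_le_total)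
  have total_pow : (s.total : ℝ) ^ 4 = s.glue.total + s.cyclicGluings := by
    exact_mod_cast s.total_pow_four
  linarith

theorem abs_log_total_glue_sub_le (hs : s.RarelyConnected) :
    |Real.log s.glue.total - 4 * Real.log s.total| ≤ 1 / 10 ^ 8 := by
  have total_pos : (0 : ℝ) < s.total := by exact_mod_cast hs.total_pos
  have glue_pos : (0 : ℝ) < s.glue.total := by exact_mod_cast hs.glue.total_pos
  have log_pow : Real.log ((s.total : ℝ) ^ 4) = 4 * Real.log s.total := by
    rw [Real.log_pow, Nat.cast_ofNat]
  have upper : Real.log s.glue.total ≤ 4 * Real.log s.total := by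
    rw [← log_pow]
    exact Real.log_le_log glue_pos (by exact_mod_cast s.total_glue_le)
  have lower : 4 * Real.log s.total ≤ 1 / 10 ^ 8 + Real.log s.glue.total :=
    calc 4 * Real.log s.total ≤ Real.log ((1 + 1 / 10 ^ 8) * s.glue.total) := by
          rw [← log_pow]
          exact Real.log_le_log (pow_pos total_pos 4) hs.total_pow_four_le
      _ = Real.log (1 + 1 / 10 ^ 8) + Real.log s.glue.total :=
          Real.log_mul (by norm_num) glue_pos.ne'
      _ ≤ 1 / 10 ^ 8 + Real.log s.glue.total := by
          linarith [Real.log_le_sub_one_of_pos (x := 1 + 1 / 10 ^ 8) (by norm_num)]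
  rw [abs_sub_le_iff]
  constructor <;> linarith

theorem iterate_glue (hs : s.RarelyConnected) (n : ℕ) : (glue^[n] s).RarelyConnected :=
  Function.Iterate.rec RarelyConnected hs (fun _ ↦ RarelyConnected.glue) n

theorem exists_tendsto_log_total (hs : s.RarelyConnected) :
    ∃ L : ℝ, Tendsto (fun n ↦ Real.log (glue^[n] s).total / 4 ^ n) atTop (𝓝 L) ∧
      |Real.log s.total - L| ≤ 1 / 10 ^ 8 / 3 := by
  have almost_geometric (n : ℕ) :
      ‖Real.log (glue^[n + 1] s).total - (4 : ℝ) • Real.log (glue^[n] s).total‖ ≤ 1 / 10 ^ 8 := by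
    rw [Function.iterate_succ_apply']
    exact (hs.iterate_glue n).abs_log_total_glue_sub_le
  obtain ⟨L, hL, hL_sub⟩ := exists_tendsto_inv_pow_smul (d := (4 : ℝ))
    (x := fun n ↦ Real.log (glue^[n] s).total) (by norm_num) almost_geometric
  refine ⟨L, hL.congr fun n ↦ (div_eq_inv_mul _ _).symm, hL_sub.trans ?_⟩
  norm_num

end RarelyConnected

/-- The counts for `SG_3(n)`; `SG_3(0)` is the complete graph on four vertices. -/
def gasket (n : ℕ) : ForestCounts :=
  glue^[n] ⟨16, 3, 1, 1, 1⟩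

theorem gasket_succ (n : ℕ) : gasket (n + 1) = (gasket n).glue :=
  Function.iterate_succ_apply' ..

theorem eq_gasket {s : ℕ → ForestCounts} (zero : s 0 = ⟨16, 3, 1, 1, 1⟩)
    (succ : ∀ n, s (n + 1) = (s n).glue) (n : ℕ) : s n = gasket n := by
  induction n with
  | zero => exact zero
  | succ n ih => rw [succ, ih, gasket_succ]

theorem rarelyConnected_gasket_five : (gasket 5).RarelyConnected := by
  constructor <;> norm_num [gasket, glue]

set_option exponentiation.threshold 1500 in
theorem total_gasket_five_mem_Ioo :
    (gasket 5).total ∈ Set.Ioo (32810254974 * 10 ^ 1472) (32810254975 * 10 ^ 1472) := by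
  norm_num [gasket, glue, total]

set_option exponentiation.threshold 4000 in
theorem abs_log_total_gasket_five_sub_lt :
    |Real.log (gasket 5).total - 3413.619263842| < 1 / 10 ^ 9 := by
  obtain ⟨total_gt, total_lt⟩ := total_gasket_five_mem_Ioo
  have total_gt' : (32810254974 * 10 ^ 1472 : ℝ) < (gasket 5).total := by exact_mod_cast total_gt
  have total_lt' : ((gasket 5).total : ℝ) < 32810254975 * 10 ^ 1472 := by exact_mod_cast total_lt
  have total_pos : (0 : ℝ) < (gasket 5).total := lt_trans (by positivity) total_gt'
  have exp_lt : Real.exp ((3413 : ℕ) + 0.619263841) < 32810254974 * 10 ^ 1472 :=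
    (exp_natCast_add_le_pow_mul 3413 12 exp_one_lt_d14.le (by norm_num) (by norm_num)
      (by norm_num)).trans_lt (by norm_num [Finset.sum_range_succ, Nat.factorial])
  have lt_exp : 32810254975 * 10 ^ 1472 < Real.exp ((3413 : ℕ) + 0.619263843) :=
    (pow_mul_sum_le_exp_natCast_add 3413 12 (by norm_num) exp_one_gt_d14.le
      (by norm_num)).trans_lt' (by norm_num [Finset.sum_range_succ, Nat.factorial])
  have log_gt := (Real.lt_log_iff_exp_lt total_pos).mpr (exp_lt.trans total_gt')
  have log_lt := (Real.log_lt_iff_lt_exp total_pos).mpr (total_lt'.trans lt_exp)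
  rw [abs_sub_lt_iff]
  norm_num at log_gt log_lt ⊢
  constructor <;> linarith

end ForestCounts

/-- The asymptotic growth constant `z_{SG_3} = lim ln f(n) / (2 (4^n + 1))` satisfies
`1.66680628117 < z < 1.66680628118`. -/
theorem sg3_growth_constant_value
    (t g h p q f : ℕ → ℕ)
    (ht0 : t 0 = 16) (hg0 : g 0 = 3) (hh0 : h 0 = 1) (hp0 : p 0 = 1) (hq0 : q 0 = 1)
    (ht : ∀ n, t (n + 1) =
        72 * t n ^ 2 * p n * (g n + h n) + 56 * t n * (g n + h n) ^ 3
        + 24 * t n ^ 2 * p n ^ 2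
        + 12 * t n * p n * (11 * g n ^ 2 + 12 * g n * h n + h n ^ 2)
        + 12 * g n ^ 2 * (3 * g n ^ 2 + 8 * g n * h n + 6 * h n ^ 2)
        + 12 * t n * p n ^ 2 * (4 * g n + h n) + 48 * g n ^ 2 * p n * (g n + h n)
        + 4 * t n * p n ^ 3 + 12 * g n ^ 2 * p n ^ 2)
    (hg : ∀ n, g (n + 1) =
        6 * t n ^ 2 * q n * (g n + h n) + 24 * t n ^ 2 * p n ^ 2
        + 12 * t n * p n * (9 * g n ^ 2 + 16 * g n * h n + 7 * h n ^ 2)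
        + 4 * g n * (5 * g n ^ 3 + 18 * g n ^ 2 * h n + 24 * g n * h n ^ 2 + 14 * h n ^ 3)
        + 6 * t n ^ 2 * p n * q n + 6 * t n * p n ^ 2 * (21 * g n + 11 * h n)
        + 3 * t n * q n * (5 * g n ^ 2 + 6 * g n * h n + h n ^ 2)
        + 24 * g n * p n * (5 * g n ^ 2 + 9 * g n * h n + 4 * h n ^ 2)
        + 6 * t n * p n * q n * (3 * g n + h n) + 21 * t n * p n ^ 3
        + 6 * g n * p n ^ 2 * (19 * g n + 13 * h n)
        + 3 * g n * q n * (3 * g n ^ 2 + 4 * g n * h n + h n ^ 2)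
        + 3 * t n * p n ^ 2 * q n + 6 * g n * p n * q n * (2 * g n + h n)
        + 25 * g n * p n ^ 3 + 3 * g n * p n ^ 2 * q n)
    (hh : ∀ n, h (n + 1) =
        2 * t n ^ 2 * p n ^ 2
        + 12 * t n * p n * (g n ^ 2 + 4 * g n * h n + 3 * h n ^ 2)
        + 2 * (g n ^ 4 + 8 * g n ^ 3 * h n + 18 * g n ^ 2 * h n ^ 2
            + 16 * g n * h n ^ 3 + 11 * h n ^ 4)
        + 8 * t n * p n ^ 2 * (2 * g n + 3 * h n)
        + 8 * p n * (2 * g n ^ 3 + 9 * g n ^ 2 * h n + 9 * g n * h n ^ 2 + 2 * h n ^ 3)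
        + 4 * t n * p n ^ 3
        + 2 * p n ^ 2 * (10 * g n ^ 2 + 24 * g n * h n + 9 * h n ^ 2)
        + 8 * p n ^ 3 * (g n + h n) + p n ^ 4)
    (hp : ∀ n, p (n + 1) =
        6 * t n ^ 2 * p n * q n + 120 * t n * p n ^ 2 * (g n + h n)
        + 14 * t n * q n * (g n + h n) ^ 2 + 88 * p n * (g n + h n) ^ 3
        + 4 * t n * p n * q n * (13 * g n + 10 * h n) + 78 * t n * p n ^ 3
        + 6 * p n ^ 2 * (49 * g n ^ 2 + 78 * g n * h n + 29 * h n ^ 2)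
        + 2 * q n * (11 * g n ^ 3 + 26 * g n ^ 2 * h n + 19 * g n * h n ^ 2 + 4 * h n ^ 3)
        + t n ^ 2 * q n ^ 2 + 2 * t n * q n ^ 2 * (2 * g n + h n)
        + 26 * t n * p n ^ 2 * q n
        + 2 * p n * q n * (38 * g n ^ 2 + 50 * g n * h n + 15 * h n ^ 2)
        + 2 * p n ^ 3 * (115 * g n + 76 * h n) + 2 * t n * p n * q n ^ 2
        + q n ^ 2 * (4 * g n ^ 2 + 4 * g n * h n + h n ^ 2)
        + 2 * p n ^ 2 * q n * (31 * g n + 18 * h n) + 49 * p n ^ 4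
        + 2 * p n * q n ^ 2 * (2 * g n + h n) + 14 * p n ^ 3 * q n + p n ^ 2 * q n ^ 2)
    (hq : ∀ n, q (n + 1) =
        144 * t n * p n * q n * (g n + h n) + 208 * t n * p n ^ 3
        + 720 * p n ^ 2 * (g n + h n) ^ 2 + 56 * q n * (g n + h n) ^ 3
        + 24 * t n * q n ^ 2 * (g n + h n) + 252 * t n * p n ^ 2 * q n
        + 24 * p n * q n * (25 * g n ^ 2 + 44 * g n * h n + 19 * h n ^ 2)
        + 104 * p n ^ 3 * (17 * g n + 15 * h n) + 60 * t n * p n * q n ^ 2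
        + 24 * q n ^ 2 * (3 * g n ^ 2 + 5 * g n * h n + 2 * h n ^ 2)
        + 12 * p n ^ 2 * q n * (110 * g n + 89 * h n) + 972 * p n ^ 4
        + 4 * t n * q n ^ 3 + 12 * p n * q n ^ 2 * (22 * g n + 17 * h n)
        + 776 * p n ^ 3 * q n + 4 * q n ^ 3 * (4 * g n + 3 * h n)
        + 210 * p n ^ 2 * q n ^ 2 + 24 * p n * q n ^ 3 + q n ^ 4)
    (hf : ∀ n, f n = t n + 4 * g n + 3 * h n + 6 * p n + q n) :
    ∃ z : ℝ,
      Tendsto (fun n : ℕ => Real.log (f n) / (2 * ((4 : ℝ) ^ n + 1))) atTop (nhds z) ∧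
      1.66680628117 < z ∧ z < 1.66680628118 := by
  let s (n : ℕ) : ForestCounts := ⟨t n, g n, h n, p n, q n⟩
  have s_eq : ∀ n, s n = .gasket n :=
    ForestCounts.eq_gasket (ForestCounts.ext ht0 hg0 hh0 hp0 hq0) fun n ↦
      ForestCounts.ext (ht n) (hg n) (hh n) (hp n) (hq n)
  have f_eq (n : ℕ) : f n = (ForestCounts.gasket n).total := s_eq n ▸ hf n
  obtain ⟨L, hL, hL_sub⟩ := ForestCounts.rarelyConnected_gasket_five.exists_tendsto_log_total
  have log_five := abs_lt.mp ForestCounts.abs_log_total_gasket_five_sub_lt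
  rw [abs_le] at hL_sub
  refine ⟨L / (2 * 4 ^ 5), tendsto_div_mul_pow_add_one (by norm_num) two_ne_zero 5
    (hL.congr fun n ↦ ?_), ?_, ?_⟩
  · rw [f_eq, ForestCounts.gasket, ForestCounts.gasket, ← Function.iterate_add_apply]
  · rw [lt_div_iff₀ (by positivity)]
    norm_num at log_five hL_sub ⊢
    linarith
  · rw [div_lt_iff₀ (by positivity)]
    norm_num at log_five hL_sub ⊢
    linarith
end
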